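/- For every integer n ≥ 2, (p(n)^{1/n} / p(n+1)^{1/(n+1)}) · (1 + 3π/(√24 · n^{5/2})) > p(n-1)^{1/(n-1)} / p(n)^{1/n}. -/

import Mathlib

open Real

/-- The partition function, as a real number. -/
noncomputable def p (n : ℕ) : ℝ := (Fintype.card (Nat.Partition n) : ℝ)

/-!
Multiplied by `n³ - n`, the logarithm of the claim compares a combination `logDefect n` of
`log p(n - 1)`, `log p(n)` and `log p(n + 1)` with a quantity that is at least
`3π/√24 · √n · (1 - 1.75/n²)`. The defect has the same main term `3π/√24 · √n`, but falls short of
it by more than a constant.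

For large `n`, Cauchy's formula on a circle of radius `exp (-t)` expresses `p(n)` through an
integral `A` of `exp (-R θ) cos (φ θ)`, where `φ θ = O(θ³)` if `t` is the saddle point of `n`. The
integrals of `p(n + 1)` and `p(n - 1)` on the *same* circle are `A - C + B` and `A - C - B`, where
`C` carries the additional weight `1 - cos θ`, and `cos (φ θ)` is replaced by `sin (φ θ) sin θ` in
`B`. In the second difference of the logarithms everything cancels up to `-2 C / A`, so that
comparing the integrand with a Gaussian, to first order, gives sufficient bounds for `A`, `B`, `C`.

For `n < 8194`, all values of `p` are packed into one natural number, as the digits of the inverse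
of Euler's pentagonal number series at `2 ^ B` modulo a power of `2 ^ B`, and the claim is reduced
to one inequality between natural numbers for each `n`.
-/

section PentagonalRecurrence

variable (R : Type*) [CommRing R]

open scoped PowerSeries.WithPiTopology in
open PowerSeries in
theorem mk_card_partition_mul_pentagonalSeries :
    (mk fun n ↦ (Fintype.card (Nat.Partition n) : R)) * pentagonalSeries R = 1 := by
  let _ : TopologicalSpace R := ⊥
  have _ : DiscreteTopology R := ⟨rfl⟩
  have hprod := (Nat.Partition.hasProd_powerSeriesMk_card_restricted R fun _ ↦ True).mul
    (WithPiTopology.hasProd_one_sub_X_pow R)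
  have hcard (n : ℕ) : (Nat.Partition.restricted n fun _ ↦ True).card =
      Fintype.card (Nat.Partition n) := by
    simp [Nat.Partition.restricted]
  simp only [hcard] at hprod
  refine hprod.unique ?_
  convert hasProd_one with i
  simp only [if_true, pow_mul]
  exact WithPiTopology.tsum_pow_mul_one_sub_of_constantCoeff_eq_zero (by simp)

variable {R}

/-- The partial sum of the pentagonal number series, which agrees with `∏ (1 - x ^ i)` up to
terms of degree at least `pentagonal (-K)`. -/
def truncatedEulerFunction (x : R) (K : ℕ) : R :=
  ∑ k ∈ Finset.range K, (-1) ^ k * (x ^ pentagonal (-k) - x ^ pentagonal (k + 1))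

theorem map_truncatedEulerFunction {S : Type*} [CommRing S] (f : R →+* S) (x : R) (K : ℕ) :
    f (truncatedEulerFunction x K) = truncatedEulerFunction (f x) K := by
  simp [truncatedEulerFunction]

open scoped PowerSeries.WithPiTopology in
open PowerSeries in
theorem X_pow_dvd_pentagonalSeries_sub {M K : ℕ} (h : M ≤ pentagonal (-K)) :
    (X : R⟦X⟧) ^ M ∣ pentagonalSeries R - truncatedEulerFunction X K := by
  let _ : TopologicalSpace R := ⊥
  have _ : DiscreteTopology R := ⟨rfl⟩
  have htail := (hasSum_nat_add_iff' K).2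
    (WithPiTopology.hasSum_pow_pentagonal_sub_pentagonalSeries R)
  rw [X_pow_dvd_iff]
  intro n hn
  refine (htail.map (coeff n) (WithPiTopology.continuous_coeff R n)).unique ?_
  convert hasSum_zero with k
  have hneg : pentagonal (-K) ≤ pentagonal (-(k + K : ℕ)) :=
    pentagonal_strictAntiOn.antitoneOn (by simp) (by simp) (by simp)
  have hpos := pentagonal_neg_lt_pentagonal_add_one (k := (k + K : ℕ)) (by positivity)
  exact X_pow_dvd_iff.1 (dvd_mul_of_dvd_right (dvd_sub (pow_dvd_pow X (by lia))
    (pow_dvd_pow X (by lia))) _) n hn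

open Polynomial in
theorem pow_dvd_sum_card_partition_mul_sub_one (x : R) {M K : ℕ} (h : M ≤ pentagonal (-K)) :
    x ^ M ∣ (∑ n ∈ Finset.range M, (Fintype.card (Nat.Partition n) : R) * x ^ n) *
      truncatedEulerFunction x K - 1 := by
  set P : PowerSeries R := PowerSeries.mk fun n ↦ (Fintype.card (Nat.Partition n) : R) with hP
  have hseries : (PowerSeries.X : PowerSeries R) ^ M ∣
      (P.trunc M : PowerSeries R) * truncatedEulerFunction PowerSeries.X K - 1 := by
    have htrunc : PowerSeries.X ^ M ∣ P - (P.trunc M : PowerSeries R) := by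
      rw [PowerSeries.X_pow_dvd_iff]
      intro n hn
      rw [map_sub, coeff_coe, PowerSeries.coeff_trunc, if_pos hn, sub_self]
    have hdvd := dvd_add (htrunc.mul_right (truncatedEulerFunction PowerSeries.X K))
      ((X_pow_dvd_pentagonalSeries_sub (R := R) h).mul_left P)
    rw [mul_sub, mk_card_partition_mul_pentagonalSeries, ← dvd_neg] at hdvd
    convert hdvd using 1
    ring
  have hpoly : (X : R[X]) ^ M ∣ P.trunc M * truncatedEulerFunction X K - 1 := by
    rw [X_pow_dvd_iff]
    intro n hn
    rw [PowerSeries.X_pow_dvd_iff] at hseries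
    rw [← hseries n hn, ← coeff_coe]
    have hcoe := map_truncatedEulerFunction (coeToPowerSeries.ringHom (R := R)) X K
    simp only [coeToPowerSeries.ringHom_apply, coe_X] at hcoe
    simp [hcoe]
  have heval := map_dvd (evalRingHom x) hpoly
  rw [map_sub, map_mul, map_truncatedEulerFunction] at heval
  simpa [hP, eval, PowerSeries.eval₂_trunc_eq_sum_range] using heval

end PentagonalRecurrence

section KroneckerSubstitution

theorem ofDigits_map_range (x : ℕ) (d : ℕ → ℕ) (M : ℕ) :
    Nat.ofDigits x ((List.range M).map d) = ∑ n ∈ Finset.range M, d n * x ^ n := by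
  induction M with
  | zero => simp
  | succ M ih =>
    rw [List.range_succ, List.map_append, Nat.ofDigits_append, ih, Finset.sum_range_succ]
    simp [mul_comm]

theorem eq_ofDigits_card_partition {x M K V : ℕ} (hx : 1 < x)
    (hM : M ≤ pentagonal (-K)) (hcard : ∀ n < M, Fintype.card (Nat.Partition n) < x)
    (hV : V < x ^ M) (hVu : V * truncatedEulerFunction (x : ℤ) K ≡ 1 [ZMOD x ^ M]) :
    V = Nat.ofDigits x ((List.range M).map fun n ↦ Fintype.card (Nat.Partition n)) := by
  set W := Nat.ofDigits x ((List.range M).map fun n ↦ Fintype.card (Nat.Partition n)) with hW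
  have hWlt : W < x ^ M := by
    simpa using Nat.ofDigits_lt_base_pow_length hx (l := (List.range M).map fun n ↦
      Fintype.card (Nat.Partition n)) (by simpa using hcard)
  set u := truncatedEulerFunction (x : ℤ) K
  have hWu : W * u ≡ 1 [ZMOD x ^ M] := by
    refine (Int.modEq_iff_dvd.2 ?_).symm
    simpa [hW, ofDigits_map_range] using pow_dvd_sum_card_partition_mul_sub_one (x : ℤ) hM
  have hVW : (V : ℤ) ≡ W [ZMOD x ^ M] :=
    calc (V : ℤ) ≡ V * (W * u) [ZMOD x ^ M] := by simpa using (hWu.mul_left (V : ℤ)).symm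
      _ = W * (V * u) := by ring
      _ ≡ W [ZMOD x ^ M] := by simpa using hVu.mul_left (W : ℤ)
  exact Nat.ModEq.eq_of_lt_of_lt (Int.natCast_modEq_iff.1 (by exact_mod_cast hVW)) hV hWlt

/-- `forceNat v f` is `f v`, computed in such a way that kernel reduction evaluates `v` once, to a
numeral, before substituting it. -/
def forceNat (v : ℕ) (f : ℕ → Bool) : Bool :=
  Nat.casesOn v (f 0) fun k ↦ f (k + 1)

theorem forceNat_eq (v : ℕ) (f : ℕ → Bool) : forceNat v f = f v := by
  cases v <;> rfl

/-- Given a number `V` with base `x` digits `d₀, d₁, …`, tests the predicate `P` at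
`(n + i, dᵢ, dᵢ₊₁, dᵢ₊₂)` for all `i < 2 ^ j`, splitting `V` recursively. -/
def windowTest (P : ℕ → ℕ → ℕ → ℕ → Bool) (x : ℕ) : ℕ → ℕ → ℕ → Bool
  | 0, n, V => forceNat (V % x) fun a ↦ forceNat (V / x % x) fun b ↦ forceNat (V / x / x) fun c ↦
    P n a b c
  | j + 1, n, V =>
    (forceNat (V % x ^ (2 ^ j + 2)) fun V₁ ↦ windowTest P x j n V₁) &&
      forceNat (V / x ^ (2 ^ j)) fun V₂ ↦ forceNat (n + 2 ^ j) fun n₂ ↦ windowTest P x j n₂ V₂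

theorem windowTest_ofDigits {P : ℕ → ℕ → ℕ → ℕ → Bool} {x j n : ℕ} {L : List ℕ}
    (hL : ∀ d ∈ L, d < x) (hlen : L.length = 2 ^ j + 2)
    (h : windowTest P x j n (Nat.ofDigits x L) = true) {i : ℕ} (hi : i < 2 ^ j) :
    P (n + i) L[i] L[i + 1] L[i + 2] = true := by
  induction j generalizing n L i with
  | zero =>
    obtain rfl : i = 0 := by simpa using hi
    obtain ⟨a, b, c, rfl⟩ := List.length_eq_three.1 hlen
    simp only [List.mem_cons, List.not_mem_nil, or_false, forall_eq_or_imp, forall_eq] at hL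
    have hx : 0 < x := by lia
    simpa [windowTest, forceNat_eq, Nat.ofDigits_cons, Nat.add_mul_mod_self_left,
      Nat.add_mul_div_left, Nat.mod_eq_of_lt, Nat.div_eq_of_lt, hL, hx] using h
  | succ j ih =>
    have hx : 0 < x := (Nat.zero_le _).trans_lt (hL L[0] (by simp))
    simp only [windowTest, forceNat_eq, Bool.and_eq_true,
      Nat.ofDigits_mod_pow_eq_ofDigits_take _ hx L hL,
      Nat.ofDigits_div_pow_eq_ofDigits_drop _ hx L hL] at h
    obtain ⟨hlow, hhigh⟩ := h
    rcases lt_or_ge i (2 ^ j) with hij | hij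
    · have := ih (fun d hd ↦ hL d (List.mem_of_mem_take hd)) (by simp; lia) hlow hij
      simpa using this
    · obtain ⟨i, rfl⟩ := Nat.exists_eq_add_of_le hij
      have := ih (fun d hd ↦ hL d (List.mem_of_mem_drop hd)) (by simp; lia) hhigh
        (i := i) (by lia)
      simpa [add_assoc] using this

/-- The Newton iteration for the inverse of `u` modulo `x ^ (2 ^ k + 3)`. -/
def newtonInverse (x u : ℕ) : ℕ → ℕ
  | 0 => 1 + x + 2 * x ^ 2 + 3 * x ^ 3
  | k + 1 =>
    let v := newtonInverse x u k
    let m := x ^ (2 ^ (k + 1) + 3)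
    v * (m + 2 - v * (u % m) % m) % m

/-- Computes the partition numbers below `2 ^ j + 3` as the base `2 ^ B` digits of one number `V`,
the inverse of the truncated Euler function at `2 ^ B`, and tests the predicate `P` at
`(n, p (n - 1), p n, p (n + 1))` for `2 ≤ n < 2 ^ j + 2`. The test checks that `V` is an inverse,
so that it is sound whatever `newtonInverse` computes. -/
def partitionTest (P : ℕ → ℕ → ℕ → ℕ → Bool) (j B K : ℕ) : Bool :=
  let x : ℕ := 2 ^ B
  let m : ℕ := x ^ (2 ^ j + 3)
  -- The powers are natural numbers because the kernel has no fast integer exponentiation.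
  let e : ℤ := ∑ k ∈ Finset.range K,
    (-1) ^ k * (((x ^ pentagonal (-k) : ℕ) : ℤ) - ((x ^ pentagonal (k + 1) : ℕ) : ℤ))
  forceNat (e % m).toNat fun u ↦ forceNat (newtonInverse x u j) fun V ↦
    decide (V * u % m = 1) && decide (V < m) && forceNat (V / x) fun V ↦ windowTest P x j 2 V

theorem partitionTest_sound {P : ℕ → ℕ → ℕ → ℕ → Bool} {j B K : ℕ}
    (h : partitionTest P j B K = true) (hB : 0 < B) (hK : 2 ^ j + 3 ≤ pentagonal (-K))
    (hcard : ∀ n < 2 ^ j + 3, Fintype.card (Nat.Partition n) < 2 ^ B) {i : ℕ} (hi : i < 2 ^ j) :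
    P (i + 2) (Fintype.card (Nat.Partition (i + 1))) (Fintype.card (Nat.Partition (i + 2)))
      (Fintype.card (Nat.Partition (i + 3))) = true := by
  set L := (List.range (2 ^ j + 3)).map fun n ↦ Fintype.card (Nat.Partition n) with hL
  have hLlt : ∀ d ∈ L, d < 2 ^ B := by simpa [hL] using hcard
  have hx : 1 < 2 ^ B := Nat.one_lt_two_pow hB.ne'
  simp only [partitionTest, forceNat_eq, Bool.and_eq_true, decide_eq_true_eq] at h
  set m := (2 ^ B) ^ (2 ^ j + 3)
  set e : ℤ := ∑ k ∈ Finset.range K, (-1) ^ k * (_ - _) with he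
  set V := newtonInverse _ _ j
  obtain ⟨⟨hinv, hlt⟩, hwindow⟩ := h
  have hVe : V * e ≡ 1 [ZMOD m] :=
    calc V * e ≡ V * (e % m) [ZMOD m] := ((Int.mod_modEq e m).mul_left V).symm
      _ = ((V * (e % m).toNat : ℕ) : ℤ) := by
        rw [Nat.cast_mul, Int.toNat_of_nonneg (Int.emod_nonneg e (by positivity))]
      _ ≡ (1 : ℕ) [ZMOD m] := by
        rw [Int.natCast_modEq_iff, Nat.ModEq, hinv, Nat.mod_eq_of_lt (Nat.one_lt_pow (by simp) hx)]
  have hV : V = Nat.ofDigits (2 ^ B) L := by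
    refine eq_ofDigits_card_partition hx hK hcard hlt ?_
    simpa [truncatedEulerFunction, he, m] using hVe
  have hdrop := Nat.ofDigits_div_pow_eq_ofDigits_drop 1 (by positivity) L hLlt
  rw [pow_one] at hdrop
  rw [hV, hdrop] at hwindow
  have hPi := windowTest_ofDigits (fun d hd ↦ hLlt d (List.mem_of_mem_drop hd)) (by simp [hL])
    hwindow hi
  simpa [hL, add_comm 1, add_comm 2] using hPi

end KroneckerSubstitution

section DivisorRecurrence

open Finset

theorem card_partition_mono : Monotone fun n ↦ Fintype.card (Nat.Partition n) := by
  refine monotone_nat_of_le_succ fun n ↦ ?_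
  have hcard := Fintype.card_congr
    (Nat.Partition.partitionWithPartEquiv le_rfl (Nat.le_add_left 1 n))
  rw [Nat.add_sub_cancel] at hcard
  exact hcard ▸ Fintype.card_subtype_le _

theorem sum_count_parts_eq_add {a n : ℕ} (ha : 0 < a) (han : a ≤ n) :
    ∑ l : Nat.Partition n, l.parts.count a =
      Fintype.card (Nat.Partition (n - a)) + ∑ l : Nat.Partition (n - a), l.parts.count a := by
  have hcount (l : {l : Nat.Partition n // a ∈ l.parts}) : l.1.parts.count a =
      1 + (Nat.Partition.partitionWithPartEquiv ha han l).parts.count a := by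
    have := Multiset.count_pos.2 l.2
    rw [Nat.Partition.partitionWithPartEquiv_apply_parts, Multiset.count_erase_self]
    lia
  have hzero : ∀ l ∈ univ.filter fun l : Nat.Partition n ↦ a ∉ l.parts, l.parts.count a = 0 :=
    fun l hl ↦ Multiset.count_eq_zero.2 (mem_filter.1 hl).2
  rw [← sum_filter_add_sum_filter_not _ (fun l ↦ a ∈ l.parts), sum_eq_zero hzero,
    sum_subtype _ (p := fun l ↦ a ∈ l.parts) (by simp), add_zero, sum_congr rfl fun l _ ↦ hcount l,
    Equiv.sum_comp _ fun l : Nat.Partition (n - a) ↦ 1 + l.parts.count a, sum_add_distrib]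
  simp

theorem sum_count_parts {a : ℕ} (ha : 0 < a) (n : ℕ) :
    ∑ l : Nat.Partition n, l.parts.count a =
      ∑ j ∈ Ioc 0 (n / a), Fintype.card (Nat.Partition (n - a * j)) := by
  induction n using Nat.strong_induction_on with
  | _ n ih =>
    rcases lt_or_ge n a with hna | hna
    · rw [Nat.div_eq_of_lt hna, Ioc_self, sum_empty]
      refine sum_eq_zero fun l _ ↦ Multiset.count_eq_zero.2 fun hl ↦ ?_
      exact hna.not_ge (l.le_of_mem_parts hl)
    · have hdiv : n / a = (n - a) / a + 1 := Nat.div_eq_sub_div ha hna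
      rw [sum_count_parts_eq_add ha hna, ih (n - a) (by lia), hdiv,
        ← sum_Ioc_consecutive _ zero_le_one (Nat.le_add_left 1 _)]
      congr 1
      · simp [show Ioc 0 1 = {1} from rfl]
      · have hshift : (Ioc 0 ((n - a) / a)).map (addRightEmbedding 1) = Ioc 1 ((n - a) / a + 1) :=
          map_add_right_Ioc 0 _ 1
        rw [← hshift, sum_map]
        simp [mul_add, Nat.sub_sub, add_comm a]

theorem sum_Ioc_sum_divisorsAntidiagonal {M : Type*} [AddCommMonoid M] (f : ℕ × ℕ → M) (n : ℕ) :
    ∑ k ∈ Ioc 0 n, ∑ x ∈ k.divisorsAntidiagonal, f x =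
      ∑ a ∈ Ioc 0 n, ∑ j ∈ Ioc 0 (n / a), f (a, j) := by
  have hdivisors : ∀ k ∈ Ioc 0 n, ∑ x ∈ k.divisorsAntidiagonal, f x =
      ∑ x ∈ Ioc 0 n ×ˢ Ioc 0 n, if x.1 * x.2 = k then f x else 0 := fun k hk ↦ by
    have hk := mem_Ioc.1 hk
    rw [Nat.divisorsAntidiagonal_eq_prod_filter_of_le hk.1.ne' hk.2, sum_filter]
  have hmultiples : ∀ a ∈ Ioc 0 n, ∑ j ∈ Ioc 0 (n / a), f (a, j) =
      ∑ j ∈ Ioc 0 n, if a * j ∈ Ioc 0 n then f (a, j) else 0 := fun a ha ↦ by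
    have ha := (mem_Ioc.1 ha).1
    rw [← sum_filter]
    congr 1
    ext j
    have := Nat.le_mul_of_pos_left j ha
    have := Nat.mul_pos_iff_of_pos_left (b := j) ha
    rw [mem_filter, mem_Ioc, mem_Ioc, mem_Ioc, Nat.le_div_iff_mul_le ha, mul_comm j]
    lia
  rw [sum_congr rfl hdivisors, sum_congr rfl hmultiples, sum_comm, sum_product]
  simp

open ArithmeticFunction in
theorem mul_card_partition (n : ℕ) : n * Fintype.card (Nat.Partition n) =
    ∑ k ∈ Ioc 0 n, sigma 1 k * Fintype.card (Nat.Partition (n - k)) :=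
  calc n * Fintype.card (Nat.Partition n) = ∑ l : Nat.Partition n, l.parts.sum := by
        simp [Nat.Partition.parts_sum, mul_comm]
    _ = ∑ l : Nat.Partition n, ∑ a ∈ Ioc 0 n, l.parts.count a * a := by
      refine sum_congr rfl fun l _ ↦ sum_multiset_count_of_subset _ _ fun a ha ↦ ?_
      have ha := Multiset.mem_toFinset.1 ha
      exact mem_Ioc.2 ⟨l.parts_pos ha, l.le_of_mem_parts ha⟩
    _ = ∑ a ∈ Ioc 0 n, ∑ j ∈ Ioc 0 (n / a), a * Fintype.card (Nat.Partition (n - a * j)) := by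
      rw [sum_comm]
      refine sum_congr rfl fun a ha ↦ ?_
      rw [← sum_mul, sum_count_parts (mem_Ioc.1 ha).1, mul_comm, mul_sum]
    _ = ∑ k ∈ Ioc 0 n, ∑ x ∈ k.divisorsAntidiagonal,
          x.1 * Fintype.card (Nat.Partition (n - x.1 * x.2)) :=
      (sum_Ioc_sum_divisorsAntidiagonal
        (fun x ↦ x.1 * Fintype.card (Nat.Partition (n - x.1 * x.2))) n).symm
    _ = ∑ k ∈ Ioc 0 n, sigma 1 k * Fintype.card (Nat.Partition (n - k)) := by
      refine sum_congr rfl fun k _ ↦ ?_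
      rw [sigma_one_apply, ← Nat.sum_divisorsAntidiagonal fun d _ ↦ d, sum_mul]
      refine sum_congr rfl fun x hx ↦ ?_
      rw [(Nat.mem_divisorsAntidiagonal.1 hx).1]

end DivisorRecurrence

section RatioTest

theorem p_pos (n : ℕ) : 0 < p n := Nat.cast_pos.2 Fintype.card_pos

theorem p_mono : Monotone p := Nat.mono_cast.comp card_partition_mono

/-- The function `n ↦ 2 log p(n) + n² (log p(n+1) + log p(n-1) - 2 log p(n)) -
n (log p(n+1) - log p(n-1))`: multiplying the logarithm of
`(p(n-1) ^ (1 / (n-1)) / p(n) ^ (1 / n)) / (p(n) ^ (1 / n) / p(n+1) ^ (1 / (n+1)))` by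
`n³ - n` gives this. -/
noncomputable def logDefect (n : ℕ) : ℝ :=
  2 * log (p n) + n ^ 2 * (log (p (n + 1)) + log (p (n - 1)) - 2 * log (p n)) -
    n * (log (p (n + 1)) - log (p (n - 1)))

theorem mul_nth_root_ratio_gt_of_logDefect_lt {n : ℕ} (hn : 2 ≤ n) {w : ℝ} (hw : 0 < w)
    (h : logDefect n < ((n : ℝ) ^ 3 - n) * log w) :
    p n ^ ((1 : ℝ) / (n : ℝ)) / p (n + 1) ^ ((1 : ℝ) / ((n : ℝ) + 1)) * w >
      p (n - 1) ^ ((1 : ℝ) / ((n : ℝ) - 1)) / p n ^ ((1 : ℝ) / (n : ℝ)) := by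
  have hn' : (2 : ℝ) ≤ n := by exact_mod_cast hn
  have hn1 : 0 < (n : ℝ) - 1 := by linarith
  have hb := p_pos n
  have hc := p_pos (n + 1)
  have ha := p_pos (n - 1)
  rw [gt_iff_lt, ← log_lt_log_iff (by positivity) (by positivity),
    log_mul (by positivity) hw.ne', log_div (by positivity) (by positivity),
    log_div (by positivity) (by positivity), log_rpow hb, log_rpow hc, log_rpow ha, ← sub_pos]
  have hfactor : (1 / (n : ℝ) * log (p n) - 1 / ((n : ℝ) + 1) * log (p (n + 1)) + log w -
      (1 / ((n : ℝ) - 1) * log (p (n - 1)) - 1 / (n : ℝ) * log (p n))) *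
      (n * ((n : ℝ) - 1) * (n + 1)) = ((n : ℝ) ^ 3 - n) * log w - logDefect n := by
    rw [logDefect]
    field_simp
    ring
  exact pos_of_mul_pos_left (by rw [hfactor]; linarith) (by positivity)

theorem mul_sqrt_le_mul_log {x : ℝ} (hx : 2 ≤ x) :
    3 * π / √24 * √x * (1 - 1.75 / x ^ 2) ≤
      (x ^ 3 - x) * log (1 + 3 * π / (√24 * x ^ ((5 : ℝ) / 2))) := by
  have hx0 : 0 < x := by linarith
  set γ := 3 * π / √24 with hγ
  have hγ0 : 0 < γ := by positivity
  have hγ2 : γ ≤ 1.95 := by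
    have h24 : (4.89 : ℝ) ≤ √24 := le_sqrt_of_sq_le (by norm_num)
    rw [hγ, div_le_iff₀ (by positivity)]
    linarith [pi_lt_d4]
  have hpow : x ^ ((5 : ℝ) / 2) = √x * x ^ 2 := by
    rw [show (5 : ℝ) / 2 = 1 / 2 + (2 : ℕ) by norm_num, rpow_add hx0, ← sqrt_eq_rpow, rpow_natCast]
  obtain ⟨z, hz⟩ : ∃ z, z = γ / (√x * x ^ 2) := ⟨_, rfl⟩
  have hz0 : 0 < z := by rw [hz]; positivity
  have hzx : x ^ 3 * z = γ * √x := by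
    rw [hz]
    field_simp
    rw [sq_sqrt hx0.le]
  have hzle : z * x ^ 2 ≤ 1.5 := by
    have hs : (1.4 : ℝ) ≤ √x := le_sqrt_of_sq_le (by linarith)
    rw [hz, show γ / (√x * x ^ 2) * x ^ 2 = γ / √x by field_simp, div_le_iff₀ (sqrt_pos.2 hx0)]
    linarith
  have hlog : z - z ^ 2 / 2 ≤ log (1 + z) := by
    refine le_trans ?_ (le_log_one_add_of_nonneg hz0.le)
    rw [le_div_iff₀ (by positivity)]
    nlinarith [pow_pos hz0 3]
  rw [hpow, show 3 * π / (√24 * (√x * x ^ 2)) = z by rw [hz, hγ]; field_simp, ← hzx]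
  have hx3 : 0 ≤ x ^ 3 - x := by nlinarith [sq_nonneg (x - 1)]
  have hinv : 0 ≤ 1 - 1 / x ^ 2 := by
    rw [sub_nonneg, div_le_one (by positivity)]
    nlinarith
  calc x ^ 3 * z * (1 - 1.75 / x ^ 2) = x * z * (x ^ 2 - 1 - 1.5 / 2) := by field_simp; ring
    _ ≤ x * z * (x ^ 2 - 1 - (1 - 1 / x ^ 2) * (z * x ^ 2) / 2) := by
      have : 0 ≤ 1 / x ^ 2 := by positivity
      gcongr
      nlinarith [mul_pos hz0 (pow_pos hx0 2)]
    _ = (x ^ 3 - x) * (z - z ^ 2 / 2) := by field_simp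
    _ ≤ (x ^ 3 - x) * log (1 + z) := by gcongr

theorem two_mul_sub_div_add_le_log_sub_log {a c : ℝ} (ha : 0 < a) (hac : a ≤ c) :
    2 * (c - a) / (c + a) ≤ log c - log a := by
  have hlog := le_log_one_add_of_nonneg (x := (c - a) / a) (div_nonneg (by linarith) ha.le)
  rw [sub_div, div_self ha.ne', add_sub_cancel, log_div (by linarith) ha.ne'] at hlog
  convert hlog using 1
  field_simp
  ring

theorem four_mul_div_le_sqrt {g x : ℝ} (hg : 0 < g) (hx : 0 < x) :
    4 * g * x / (g ^ 2 + 4 * x) ≤ √x := by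
  rw [div_le_iff₀ (by positivity)]
  nlinarith [sq_sqrt hx.le, mul_nonneg (sqrt_nonneg x) (sq_nonneg (g - 2 * √x))]

/-- A test in natural number arithmetic, at `(n, p (n - 1), p n, p (n + 1))`, sufficient for the
theorem at `n`. It clears denominators in the inequality of `lt_of_ratioTest`, where `b < 2 ^ k`; by
the growth of the partition numbers, `g` is close to `2 √n`. -/
def ratioTest (n a b c : ℕ) : Bool :=
  forceNat (Nat.log 2 b + 1) fun k ↦ forceNat (k / 2 + 3) fun g ↦ decide (
    139 * k * n ^ 2 * b ^ 2 * ((c + a) * (g ^ 2 + 4 * n)) +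
      100 * n ^ 4 * (c * a) * ((c + a) * (g ^ 2 + 4 * n)) +
      200 * n ^ 3 * a * b ^ 2 * (g ^ 2 + 4 * n) + 336 * (4 * g * n) * b ^ 2 * (c + a) <
    100 * n ^ 4 * b ^ 2 * ((c + a) * (g ^ 2 + 4 * n)) + 200 * n ^ 3 * c * b ^ 2 * (g ^ 2 + 4 * n) +
      192 * (4 * g * n) * n ^ 2 * b ^ 2 * (c + a))

theorem lt_of_ratioTest {n a b c : ℕ} (hn : 0 < n) (hb : 0 < b) (hc : 0 < c)
    (h : ratioTest n a b c = true) :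
    ∃ k g : ℕ, b < 2 ^ k ∧ 0 < g ∧
      1.39 * k + n ^ 2 * (c * a / b ^ 2 - 1) - n * (2 * (c - a) / (c + a)) <
        1.92 * (4 * g * n / (g ^ 2 + 4 * n)) * (1 - 1.75 / n ^ 2 : ℝ) := by
  simp only [ratioTest, forceNat_eq, decide_eq_true_eq] at h
  refine ⟨Nat.log 2 b + 1, (Nat.log 2 b + 1) / 2 + 3, Nat.lt_pow_succ_log_self one_lt_two b,
    Nat.succ_pos _, ?_⟩
  set k := Nat.log 2 b + 1
  set g := k / 2 + 3
  have h : ((_ : ℕ) : ℝ) < (_ : ℕ) := Nat.cast_lt.2 h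
  push_cast at h
  have hden : (0 : ℝ) < 100 * n ^ 2 * b ^ 2 * ((c + a) * (g ^ 2 + 4 * n)) := by positivity
  rw [← sub_pos] at h ⊢
  refine pos_of_mul_pos_left (h.trans_eq ?_) hden.le
  field_simp
  ring

theorem logDefect_lt_of_ratioTest {n : ℕ} (hn : 2 ≤ n)
    (h : ratioTest n (Fintype.card (Nat.Partition (n - 1))) (Fintype.card (Nat.Partition n))
        (Fintype.card (Nat.Partition (n + 1))) = true) :
    logDefect n < 3 * π / √24 * √n * (1 - 1.75 / n ^ 2) := by
  obtain ⟨k, g, hk, hg, hlt⟩ :=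
    lt_of_ratioTest (by lia) Fintype.card_pos Fintype.card_pos h
  have ha := p_pos (n - 1)
  have hb := p_pos n
  have hc := p_pos (n + 1)
  have hn' : (2 : ℝ) ≤ n := by exact_mod_cast hn
  simp only [← p.eq_1] at hlt
  have hlogb : 2 * log (p n) ≤ 1.39 * k :=
    calc 2 * log (p n) ≤ 2 * log (2 ^ k) := by
          gcongr
          rw [p]
          exact_mod_cast hk.le
      _ = 2 * log 2 * k := by rw [log_pow]; ring
      _ ≤ 1.39 * k := by
        gcongr
        linarith [log_two_lt_d9]
  have hsecond : log (p (n + 1)) + log (p (n - 1)) - 2 * log (p n) ≤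
      p (n + 1) * p (n - 1) / p n ^ 2 - 1 := by
    refine le_trans (le_of_eq ?_) (log_le_sub_one_of_pos (by positivity))
    rw [log_div (by positivity) (by positivity), log_mul hc.ne' ha.ne', log_pow, Nat.cast_two]
  have hfirst := two_mul_sub_div_add_le_log_sub_log ha (p_mono (show n - 1 ≤ n + 1 by lia))
  have hγ : 1.92 ≤ 3 * π / √24 := by
    have h24 : √24 ≤ 4.9 := sqrt_le_iff.2 (by norm_num)
    rw [le_div_iff₀ (by positivity)]
    linarith [pi_gt_d4]
  have hfactor : 0 ≤ 1 - 1.75 / (n : ℝ) ^ 2 := by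
    rw [sub_nonneg, div_le_one (by positivity)]
    nlinarith only [hn']
  calc logDefect n ≤ 1.39 * k + n ^ 2 * (p (n + 1) * p (n - 1) / p n ^ 2 - 1) -
        n * (2 * (p (n + 1) - p (n - 1)) / (p (n + 1) + p (n - 1))) := by
        rw [logDefect]
        gcongr
    _ < 1.92 * (4 * g * n / (g ^ 2 + 4 * n)) * (1 - 1.75 / (n : ℝ) ^ 2) := hlt
    _ ≤ 3 * π / √24 * √n * (1 - 1.75 / n ^ 2) := by
      gcongr
      exact four_mul_div_le_sqrt (by positivity) (by positivity)

end RatioTest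

section Cauchy

open ArithmeticFunction Finset
open scoped ArithmeticFunction.sigma Nat

theorem summable_sigma_mul_pow {r : ℝ} (hr : 0 ≤ r) (hr' : r < 1) (j : ℕ) :
    Summable fun k : ℕ ↦ (σ 1 k : ℝ) * (k : ℝ) ^ j * r ^ k := by
  refine Summable.of_nonneg_of_le (fun k ↦ by positivity) (fun k ↦ ?_)
    (summable_pow_mul_geometric_of_norm_lt_one (R := ℝ) (2 + j) (r := r)
      (by rwa [Real.norm_of_nonneg hr]))
  rw [pow_add]
  gcongr
  exact_mod_cast sigma_le_pow_succ 1 k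

theorem summable_sigma_div_mul_pow {r : ℝ} (hr : 0 ≤ r) (hr' : r < 1) :
    Summable fun k : ℕ ↦ (σ 1 k : ℝ) / k * r ^ k := by
  refine Summable.of_nonneg_of_le (fun k ↦ by positivity) (fun k ↦ ?_)
    (summable_sigma_mul_pow hr hr' 0)
  rw [pow_zero, mul_one]
  gcongr
  exact div_nat_le_self_of_nonnneg (Nat.cast_nonneg _) k

/-- The logarithm `log ∏ (1 - z ^ m)⁻¹ = ∑ σ(k) z ^ k / k` of the generating function of the
partition numbers. -/
noncomputable def complexLogGen (z : ℂ) : ℂ := ∑' k : ℕ, (σ 1 k : ℂ) / k * z ^ k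

theorem norm_sigma_div_mul_pow (k : ℕ) (z : ℂ) :
    ‖(σ 1 k : ℂ) / k * z ^ k‖ = (σ 1 k : ℝ) / k * ‖z‖ ^ k := by
  simp only [norm_mul, norm_div, norm_pow, Complex.norm_natCast]

theorem hasSum_complexLogGen {z : ℂ} (hz : ‖z‖ < 1) :
    HasSum (fun k : ℕ ↦ (σ 1 k : ℂ) / k * z ^ k) (complexLogGen z) := by
  refine (Summable.of_norm ?_).hasSum
  simp_rw [norm_sigma_div_mul_pow]
  exact summable_sigma_div_mul_pow (norm_nonneg z) hz

theorem complexLogGen_zero : complexLogGen 0 = 0 := by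
  refine (tsum_congr fun k ↦ ?_).trans tsum_zero
  cases k <;> simp

theorem differentiableOn_complexLogGen :
    DifferentiableOn ℂ complexLogGen (Metric.ball 0 1) := by
  intro z hz
  have hz : ‖z‖ < 1 := by simpa using hz
  obtain ⟨r, hzr, hr⟩ := exists_between hz
  have hdiff : DifferentiableOn ℂ complexLogGen (Metric.ball 0 r) := by
    refine Complex.differentiableOn_tsum_of_summable_norm
      (summable_sigma_div_mul_pow ((norm_nonneg z).trans hzr.le) hr)
      (fun k ↦ by fun_prop) Metric.isOpen_ball fun k w hw ↦ ?_
    have hw : ‖w‖ < r := by simpa using hw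
    rw [norm_sigma_div_mul_pow]
    gcongr
  exact (hdiff.differentiableAt (Metric.isOpen_ball.mem_nhds (by simpa using hzr)))
    |>.differentiableWithinAt

theorem iteratedDeriv_zero_eq_of_hasSum {f : ℂ → ℂ} {a : ℕ → ℂ}
    (h : ∀ᶠ z in nhds 0, HasSum (fun k ↦ a k * z ^ k) (f z)) (n : ℕ) :
    iteratedDeriv n f 0 = n ! * a n := by
  have hf : HasFPowerSeriesAt f (FormalMultilinearSeries.ofScalars ℂ a) 0 :=
    hasFPowerSeriesAt_iff.2 <| by simpa [mul_comm] using h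
  have hcoeff := congrArg (·.coeff n)
    (hf.analyticAt.hasFPowerSeriesAt.eq_formalMultilinearSeries hf)
  simp only [FormalMultilinearSeries.coeff_ofScalars] at hcoeff
  rw [← hcoeff, mul_div_cancel₀ _ (by exact_mod_cast n.factorial_ne_zero)]

theorem iteratedDeriv_succ_complexLogGen_zero (n : ℕ) :
    iteratedDeriv (n + 1) complexLogGen 0 = n ! * σ 1 (n + 1) := by
  have hball : ∀ᶠ z : ℂ in nhds 0, ‖z‖ < 1 := by
    filter_upwards [Metric.ball_mem_nhds (0 : ℂ) one_pos] with z hz using by simpa using hz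
  rw [iteratedDeriv_zero_eq_of_hasSum (hball.mono fun z hz ↦ hasSum_complexLogGen hz),
    Nat.factorial_succ]
  push_cast
  field_simp

theorem succ_mul_card_partition_succ (n : ℕ) : (n + 1) * Fintype.card (Nat.Partition (n + 1)) =
    ∑ i ∈ range (n + 1), σ 1 (i + 1) * Fintype.card (Nat.Partition (n - i)) := by
  rw [mul_card_partition, ← Ico_add_one_add_one_eq_Ioc, ← sum_Ico_add', ← range_eq_Ico]
  simp only [Nat.add_sub_add_right]

theorem iteratedDeriv_exp_complexLogGen_zero (n : ℕ) :
    iteratedDeriv n (fun z ↦ Complex.exp (complexLogGen z)) 0 =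
      n ! * Fintype.card (Nat.Partition n) := by
  have hball : Metric.ball (0 : ℂ) 1 ∈ nhds 0 := Metric.ball_mem_nhds _ one_pos
  have hlog : AnalyticAt ℂ complexLogGen 0 := differentiableOn_complexLogGen.analyticAt hball
  have hexp : AnalyticAt ℂ (fun z ↦ Complex.exp (complexLogGen z)) 0 := hlog.cexp
  have hderiv : deriv (fun z ↦ Complex.exp (complexLogGen z)) =ᶠ[nhds 0]
      deriv complexLogGen * fun z ↦ Complex.exp (complexLogGen z) := by
    filter_upwards [hball] with z hz
    have hz := differentiableOn_complexLogGen.differentiableAt (Metric.isOpen_ball.mem_nhds hz)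
    rw [hz.hasDerivAt.cexp.deriv, mul_comm, Pi.mul_apply]
  induction n using Nat.strong_induction_on with
  | _ n ih =>
    rcases n with _ | n
    · simp [complexLogGen_zero]
    have hterm : ∀ i ∈ range (n + 1), (n.choose i : ℂ) * iteratedDeriv i (deriv complexLogGen) 0 *
        iteratedDeriv (n - i) (fun z ↦ Complex.exp (complexLogGen z)) 0 =
          n ! * ↑(σ 1 (i + 1) * Fintype.card (Nat.Partition (n - i))) := fun i hi ↦ by
      have hi : i ≤ n := mem_range_succ_iff.1 hi
      rw [← iteratedDeriv_succ', iteratedDeriv_succ_complexLogGen_zero, ih (n - i) (by lia),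
        ← Nat.choose_mul_factorial_mul_factorial hi]
      push_cast
      ring
    rw [iteratedDeriv_succ', hderiv.iteratedDeriv_eq n,
      iteratedDeriv_mul hlog.deriv.contDiffAt hexp.contDiffAt, sum_congr rfl hterm,
      ← mul_sum, ← Nat.cast_sum, ← succ_mul_card_partition_succ, Nat.factorial_succ]
    push_cast
    ring

theorem integral_exp_complexLogGen {r : ℝ} (hr : 0 < r) (hr' : r < 1) (n : ℕ) :
    ∫ θ in 0..2 * π, Complex.exp (complexLogGen (circleMap 0 r θ) - n * θ * Complex.I) =
      2 * π * Fintype.card (Nat.Partition n) * r ^ n := by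
  have hCauchy := (differentiableOn_complexLogGen.cexp.mono
    (Metric.closedBall_subset_ball hr')).circleIntegral_one_div_sub_center_pow_smul hr n
  rw [iteratedDeriv_exp_complexLogGen_zero, circleIntegral] at hCauchy
  have hr0 : (r : ℂ) ≠ 0 := by exact_mod_cast hr.ne'
  have hterm (θ : ℝ) : deriv (circleMap 0 r) θ • (1 / (circleMap 0 r θ - 0) ^ (n + 1)) •
      Complex.exp (complexLogGen (circleMap 0 r θ)) = Complex.I / r ^ n *
        Complex.exp (complexLogGen (circleMap 0 r θ) - n * θ * Complex.I) := by
    have hpow : Complex.exp (n * θ * Complex.I) = Complex.exp (θ * Complex.I) ^ n := by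
      rw [← Complex.exp_nat_mul, mul_assoc]
    have := Complex.exp_ne_zero (θ * Complex.I)
    rw [Complex.exp_sub, hpow, deriv_circleMap, circleMap_zero, smul_eq_mul, smul_eq_mul, sub_zero]
    field_simp
    ring
  simp_rw [hterm] at hCauchy
  rw [intervalIntegral.integral_const_mul, smul_eq_mul] at hCauchy
  refine mul_left_cancel₀ (div_ne_zero Complex.I_ne_zero (pow_ne_zero n hr0)) (hCauchy.trans ?_)
  have : (n ! : ℂ) ≠ 0 := by exact_mod_cast n.factorial_ne_zero
  field_simp

theorem continuous_complexLogGen_circleMap {r : ℝ} (hr : 0 ≤ r) (hr' : r < 1) :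
    Continuous fun θ ↦ complexLogGen (circleMap 0 r θ) :=
  differentiableOn_complexLogGen.continuousOn.comp_continuous (continuous_circleMap 0 r)
    fun θ ↦ by simpa [abs_of_nonneg hr] using hr'

end Cauchy

section RealParts

open ArithmeticFunction
open scoped ArithmeticFunction.sigma

/-- The value `∑ σ(k) r ^ k / k` of `complexLogGen` at a real point `r`. -/
noncomputable def logGen (r : ℝ) : ℝ := ∑' k : ℕ, (σ 1 k : ℝ) / k * r ^ k

/-- The drop `∑ σ(k) r ^ k (1 - cos (k * θ)) / k` of the real part of `complexLogGen` from `r` to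
`r * exp (θ * I)`. -/
noncomputable def logGenDrop (r θ : ℝ) : ℝ :=
  ∑' k : ℕ, (σ 1 k : ℝ) / k * r ^ k * (1 - cos (k * θ))

/-- The imaginary part `∑ σ(k) r ^ k sin (k * θ) / k` of `complexLogGen` at `r * exp (θ * I)`. -/
noncomputable def logGenArg (r θ : ℝ) : ℝ := ∑' k : ℕ, (σ 1 k : ℝ) / k * r ^ k * sin (k * θ)

/-- The cumulant `∑ σ(k) k ^ j r ^ k = (r d/dr) ^ (j + 1) logGen r` of order `j + 1` of the
partition weights `p n * r ^ n`. -/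
noncomputable def logGenCumulant (j : ℕ) (r : ℝ) : ℝ := ∑' k : ℕ, (σ 1 k : ℝ) * (k : ℝ) ^ j * r ^ k

theorem norm_sigma_div_mul_pow_mul_le {r : ℝ} (hr : 0 ≤ r) (k : ℕ) {x b : ℝ} (hx : |x| ≤ b) :
    ‖(σ 1 k : ℝ) / k * r ^ k * x‖ ≤ (σ 1 k : ℝ) / k * r ^ k * b := by
  rw [norm_mul, Real.norm_of_nonneg (by positivity : 0 ≤ (σ 1 k : ℝ) / k * r ^ k)]
  gcongr
  exact hx

theorem abs_one_sub_cos_le_two (x : ℝ) : |1 - cos x| ≤ 2 := by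
  rw [abs_le]; constructor <;> linarith [cos_le_one x, neg_one_le_cos x]

theorem summable_logGenDrop {r : ℝ} (hr : 0 ≤ r) (hr' : r < 1) (θ : ℝ) :
    Summable fun k : ℕ ↦ (σ 1 k : ℝ) / k * r ^ k * (1 - cos (k * θ)) :=
  Summable.of_norm_bounded ((summable_sigma_div_mul_pow hr hr').mul_right 2)
    fun k ↦ norm_sigma_div_mul_pow_mul_le hr k (abs_one_sub_cos_le_two _)

theorem summable_logGenArg {r : ℝ} (hr : 0 ≤ r) (hr' : r < 1) (θ : ℝ) :
    Summable fun k : ℕ ↦ (σ 1 k : ℝ) / k * r ^ k * sin (k * θ) :=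
  Summable.of_norm_bounded ((summable_sigma_div_mul_pow hr hr').mul_right 1)
    fun k ↦ norm_sigma_div_mul_pow_mul_le hr k (abs_sin_le_one _)

theorem continuous_logGenDrop {r : ℝ} (hr : 0 ≤ r) (hr' : r < 1) : Continuous (logGenDrop r) :=
  continuous_tsum (fun k ↦ by fun_prop) ((summable_sigma_div_mul_pow hr hr').mul_right 2)
    fun k _ ↦ norm_sigma_div_mul_pow_mul_le hr k (abs_one_sub_cos_le_two _)

theorem continuous_logGenArg {r : ℝ} (hr : 0 ≤ r) (hr' : r < 1) : Continuous (logGenArg r) :=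
  continuous_tsum (fun k ↦ by fun_prop) ((summable_sigma_div_mul_pow hr hr').mul_right 1)
    fun k _ ↦ norm_sigma_div_mul_pow_mul_le hr k (abs_sin_le_one _)

theorem complexLogGen_circleMap {r : ℝ} (hr : 0 ≤ r) (hr' : r < 1) (θ : ℝ) :
    complexLogGen (circleMap 0 r θ) = ⟨logGen r - logGenDrop r θ, logGenArg r θ⟩ := by
  have hterm (k : ℕ) : (σ 1 k : ℂ) / k * circleMap 0 r θ ^ k =
      ((σ 1 k / k * r ^ k : ℝ) : ℂ) * Complex.exp ((k * θ : ℝ) * Complex.I) := by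
    rw [circleMap_zero, mul_pow, ← Complex.exp_nat_mul]
    push_cast
    ring_nf
  refine HasSum.tsum_eq ((Complex.hasSum_iff _ _).2 ⟨?_, ?_⟩)
  · refine ((summable_sigma_div_mul_pow hr hr').hasSum.sub
      (summable_logGenDrop hr hr' θ).hasSum).congr_fun fun k ↦ ?_
    rw [hterm, Complex.re_ofReal_mul, Complex.exp_ofReal_mul_I_re]
    ring
  · refine (summable_logGenArg hr hr' θ).hasSum.congr_fun fun k ↦ ?_
    rw [hterm, Complex.im_ofReal_mul, Complex.exp_ofReal_mul_I_im]

theorem logGenDrop_nonneg {r : ℝ} (hr : 0 ≤ r) (θ : ℝ) : 0 ≤ logGenDrop r θ :=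
  tsum_nonneg fun _ ↦ mul_nonneg (by positivity) (sub_nonneg.2 (cos_le_one _))

theorem integral_two_mul_eq_of_symm {f : ℝ → ℝ} {a : ℝ} (hf : Continuous f)
    (hsymm : ∀ x, f (2 * a - x) = f x) : ∫ x in 0..2 * a, f x = 2 * ∫ x in 0..a, f x := by
  have hreflect : ∫ x in 0..a, f (2 * a - x) = ∫ x in a..2 * a, f x := by
    rw [intervalIntegral.integral_comp_sub_left]
    congr 1 <;> ring
  simp_rw [hsymm] at hreflect
  rw [← intervalIntegral.integral_add_adjacent_intervals (hf.intervalIntegrable 0 a)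
    (hf.intervalIntegrable a (2 * a)), ← hreflect, two_mul]

theorem logGenDrop_two_pi_sub (r θ : ℝ) : logGenDrop r (2 * π - θ) = logGenDrop r θ := by
  simp only [logGenDrop, mul_sub, cos_nat_mul_two_pi_sub]

theorem logGenArg_two_pi_sub (r θ : ℝ) : logGenArg r (2 * π - θ) = -logGenArg r θ := by
  simp only [logGenArg, mul_sub, sin_nat_mul_two_pi_sub, mul_neg, tsum_neg]

theorem re_exp_complexLogGen_sub {r : ℝ} (hr : 0 ≤ r) (hr' : r < 1) (n : ℕ) (θ : ℝ) :
    (Complex.exp (complexLogGen (circleMap 0 r θ) - n * θ * Complex.I)).re =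
      rexp (logGen r) * (rexp (-logGenDrop r θ) * cos (logGenArg r θ - n * θ)) := by
  rw [complexLogGen_circleMap hr hr', Complex.exp_re, ← mul_assoc, ← Real.exp_add]
  congr 2 <;> simp [sub_eq_add_neg]

theorem integral_exp_neg_logGenDrop_mul_cos {r : ℝ} (hr : 0 < r) (hr' : r < 1) (n : ℕ) :
    ∫ θ in 0..π, rexp (-logGenDrop r θ) * cos (logGenArg r θ - n * θ) =
      π * p n * r ^ n * rexp (-logGen r) := by
  have hdrop := continuous_logGenDrop hr.le hr'
  have harg := continuous_logGenArg hr.le hr'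
  have hsymm (θ : ℝ) : rexp (-logGenDrop r (2 * π - θ)) *
      cos (logGenArg r (2 * π - θ) - n * (2 * π - θ)) =
        rexp (-logGenDrop r θ) * cos (logGenArg r θ - n * θ) := by
    rw [logGenDrop_two_pi_sub, logGenArg_two_pi_sub,
      show -logGenArg r θ - n * (2 * π - θ) = -(logGenArg r θ - n * θ) - n * (2 * π) by ring,
      cos_sub_nat_mul_two_pi, cos_neg]
  have hCauchy := congrArg Complex.re (integral_exp_complexLogGen hr hr' n)
  have hint : IntervalIntegrable
      (fun θ : ℝ ↦ Complex.exp (complexLogGen (circleMap 0 r θ) - n * θ * Complex.I))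
      MeasureTheory.volume 0 (2 * π) := by
    have := continuous_complexLogGen_circleMap hr.le hr'
    exact Continuous.intervalIntegrable (by fun_prop) _ _
  rw [← RCLike.re_to_complex, ← intervalIntegral.intervalIntegral_re hint] at hCauchy
  simp only [RCLike.re_to_complex, re_exp_complexLogGen_sub hr.le hr'] at hCauchy
  rw [intervalIntegral.integral_const_mul, integral_two_mul_eq_of_symm (by fun_prop) hsymm,
    show 2 * (π : ℂ) * (Fintype.card (Nat.Partition n) : ℂ) * (r : ℂ) ^ n =
      ((2 * (π * p n * r ^ n) : ℝ) : ℂ) by simp only [p]; push_cast; ring,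
    Complex.ofReal_re] at hCauchy
  rw [Real.exp_neg, ← div_eq_mul_inv, eq_div_iff (exp_pos _).ne']
  linarith

theorem p_mul_pow_le {r : ℝ} (hr : 0 < r) (hr' : r < 1) (n : ℕ) :
    p n * r ^ n ≤ rexp (logGen r) := by
  have hdrop := continuous_logGenDrop hr.le hr'
  have harg := continuous_logGenArg hr.le hr'
  have hle : π * (p n * r ^ n * rexp (-logGen r)) ≤ π * 1 := calc
    π * (p n * r ^ n * rexp (-logGen r))
    _ = ∫ θ in 0..π, rexp (-logGenDrop r θ) * cos (logGenArg r θ - n * θ) := by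
        rw [integral_exp_neg_logGenDrop_mul_cos hr hr']; ring
    _ ≤ ∫ θ in 0..π, 1 := by
        refine intervalIntegral.integral_mono_on pi_pos.le
          (Continuous.intervalIntegrable (by fun_prop) _ _) (by simp) fun θ _ ↦ ?_
        have hexp : rexp (-logGenDrop r θ) ≤ 1 := by simpa using logGenDrop_nonneg hr.le θ
        exact (mul_le_of_le_one_right (exp_pos _).le (cos_le_one _)).trans hexp
    _ = π * 1 := by simp
  have hle := le_of_mul_le_mul_left hle pi_pos
  rwa [exp_neg, ← div_eq_mul_inv, div_le_one (exp_pos _)] at hle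

theorem cos_le_one_sub_sq_add_pow_four (x : ℝ) : cos x ≤ 1 - x ^ 2 / 2 + x ^ 4 / 24 := by
  wlog hx : 0 ≤ x generalizing x
  · simpa [(by decide : Even 4).neg_pow] using this (-x) (by linarith)
  have hderiv (y : ℝ) : HasDerivAt (fun y ↦ 1 - y ^ 2 / 2 + y ^ 4 / 24 - cos y)
      (sin y - (y - y ^ 3 / 6)) y := by
    have h := (((hasDerivAt_const y (1 : ℝ)).sub ((hasDerivAt_pow 2 y).div_const 2)).add
      ((hasDerivAt_pow 4 y).div_const 24)).sub (hasDerivAt_cos y)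
    convert! h using 1
    push_cast
    ring
  have hmono : MonotoneOn (fun y : ℝ ↦ 1 - y ^ 2 / 2 + y ^ 4 / 24 - cos y) (Set.Ici 0) := by
    refine monotoneOn_of_hasDerivWithinAt_nonneg (convex_Ici 0) (by fun_prop)
      (fun y _ ↦ (hderiv y).hasDerivWithinAt) fun y hy ↦ sub_nonneg.2 (sin_ge_sub_cube ?_)
    exact interior_subset hy
  have h0x := hmono Set.self_mem_Ici (Set.mem_Ici.2 hx) hx
  simp only [cos_zero] at h0x
  linarith

theorem abs_sin_sub_self_le (x : ℝ) : |sin x - x| ≤ |x| ^ 3 / 6 := by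
  wlog hx : 0 ≤ x generalizing x
  · have := this (-x) (by linarith)
    rwa [sin_neg, abs_neg, ← neg_sub', abs_neg] at this
  rw [abs_of_nonneg hx, abs_le]
  constructor
  · linarith [sin_ge_sub_cube hx]
  · linarith [sin_le hx, pow_nonneg hx 3]

theorem hasSum_logGenCumulant_mul {r : ℝ} (hr : 0 ≤ r) (hr' : r < 1) (j : ℕ) (c : ℝ) :
    HasSum (fun k : ℕ ↦ (σ 1 k : ℝ) / k * r ^ k * ((k : ℝ) ^ (j + 1) * c))
      (logGenCumulant j r * c) := by
  refine ((summable_sigma_mul_pow hr hr' j).hasSum.mul_right c).congr_fun fun k ↦ ?_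
  rcases Nat.eq_zero_or_pos k with rfl | hk
  · simp
  · field_simp
    ring

theorem logGenDrop_le {r : ℝ} (hr : 0 ≤ r) (hr' : r < 1) (θ : ℝ) :
    logGenDrop r θ ≤ logGenCumulant 1 r * (θ ^ 2 / 2) := by
  refine hasSum_le (fun k ↦ ?_) (summable_logGenDrop hr hr' θ).hasSum
    (hasSum_logGenCumulant_mul hr hr' 1 (θ ^ 2 / 2))
  gcongr
  linarith [one_sub_sq_div_two_le_cos (x := k * θ), mul_pow (k : ℝ) θ 2]

theorem le_logGenDrop {r : ℝ} (hr : 0 ≤ r) (hr' : r < 1) (θ : ℝ) :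
    logGenCumulant 1 r * (θ ^ 2 / 2) - logGenCumulant 3 r * (θ ^ 4 / 24) ≤ logGenDrop r θ := by
  refine hasSum_le (fun k ↦ ?_) ((hasSum_logGenCumulant_mul hr hr' 1 (θ ^ 2 / 2)).sub
    (hasSum_logGenCumulant_mul hr hr' 3 (θ ^ 4 / 24))) (summable_logGenDrop hr hr' θ).hasSum
  rw [← mul_sub]
  refine mul_le_mul_of_nonneg_left ?_ (by positivity)
  linarith [cos_le_one_sub_sq_add_pow_four (k * θ), mul_pow (k : ℝ) θ 2, mul_pow (k : ℝ) θ 4]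

theorem abs_logGenArg_sub_le {r : ℝ} (hr : 0 ≤ r) (hr' : r < 1) {θ : ℝ} (hθ : 0 ≤ θ) :
    |logGenArg r θ - logGenCumulant 0 r * θ| ≤ logGenCumulant 2 r * (θ ^ 3 / 6) := by
  have hdiff := (summable_logGenArg hr hr' θ).hasSum.sub (hasSum_logGenCumulant_mul hr hr' 0 θ)
  have hbound := hasSum_logGenCumulant_mul hr hr' 2 (θ ^ 3 / 6)
  have hsin (k : ℕ) : |sin (k * θ) - (k : ℝ) ^ (0 + 1) * θ| ≤ (k : ℝ) ^ (2 + 1) * (θ ^ 3 / 6) := by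
    have := abs_sin_sub_self_le (k * θ)
    rw [abs_of_nonneg (by positivity : (0 : ℝ) ≤ k * θ)] at this
    rw [zero_add, pow_one]
    linarith [mul_pow (k : ℝ) θ 3]
  rw [abs_le]
  constructor
  · refine hasSum_le (fun k ↦ ?_) hbound.neg hdiff
    rw [← mul_sub, ← mul_neg]
    gcongr
    exact neg_le_of_abs_le (hsin k)
  · refine hasSum_le (fun k ↦ ?_) hdiff hbound
    rw [← mul_sub]
    gcongr
    exact le_of_abs_le (hsin k)

end RealParts

section GeometricSums

theorem hasSum_pow_mul_cos {r : ℝ} (hr : 0 ≤ r) (hr' : r < 1) (θ : ℝ) :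
    HasSum (fun k : ℕ ↦ r ^ k * cos (k * θ))
      ((1 - r * cos θ) / ((1 - r) ^ 2 + 2 * r * (1 - cos θ))) := by
  have hgeom := (Complex.hasSum_iff _ _).1 (hasSum_geometric_of_norm_lt_one
    (ξ := circleMap 0 r θ) (by simpa [abs_of_nonneg hr] using hr'))
  convert! hgeom.1 using 1
  · funext k
    rw [circleMap_zero, mul_pow, ← Complex.exp_nat_mul, ← mul_assoc,
      show ((k : ℂ) * θ) = ((k * θ : ℝ) : ℂ) by push_cast; ring, ← Complex.ofReal_pow,
      Complex.re_ofReal_mul, Complex.exp_ofReal_mul_I_re]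
  · have hre : (1 - (r : ℂ) * Complex.exp (θ * Complex.I)).re = 1 - r * cos θ := by
      simp [Complex.exp_ofReal_mul_I_re]
    have him : (1 - (r : ℂ) * Complex.exp (θ * Complex.I)).im = -(r * sin θ) := by
      simp [Complex.exp_ofReal_mul_I_im]
    rw [circleMap_zero, Complex.inv_re, Complex.normSq_apply, hre, him]
    congr 1
    linear_combination -r ^ 2 * sin_sq_add_cos_sq θ

theorem hasSum_pow_mul_one_sub_cos {r : ℝ} (hr : 0 ≤ r) (hr' : r < 1) (θ : ℝ) :
    HasSum (fun k : ℕ ↦ r ^ k * (1 - cos (k * θ)))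
      (r * (1 - cos θ) * (1 + r) / ((1 - r) * ((1 - r) ^ 2 + 2 * r * (1 - cos θ)))) := by
  have hr1 : 0 < 1 - r := sub_pos.2 hr'
  have hcos : 0 ≤ 1 - cos θ := sub_nonneg.2 (cos_le_one θ)
  have : 0 < (1 - r) ^ 2 + 2 * r * (1 - cos θ) := by positivity
  convert! (hasSum_geometric_of_lt_one hr hr').sub (hasSum_pow_mul_cos hr hr' θ) using 1
  · simp only [mul_sub, mul_one]
  · field_simp
    ring

section
variable {𝕜 : Type*} [NormedField 𝕜]

theorem factorial_mul_cast_choose (k d : ℕ) :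
    (k.factorial : 𝕜) * ((d + k).choose k : 𝕜) = ((d + 1).ascFactorial k : 𝕜) := by
  rw [Nat.ascFactorial_eq_factorial_mul_choose, Nat.cast_mul]

theorem hasSum_pow_two_mul_geometric {q : 𝕜} (hq : ‖q‖ < 1) :
    HasSum (fun d : ℕ ↦ (d : 𝕜) ^ 2 * q ^ d) (q * (1 + q) / (1 - q) ^ 3) := by
  have hchoose := fun k ↦ hasSum_choose_mul_geometric_of_norm_lt_one k hq
  have hne : 1 - q ≠ 0 := sub_ne_zero.2 (by rintro rfl; simp at hq)
  convert! (((hchoose 2).mul_left 2).sub ((hchoose 1).mul_left 3)).add (hchoose 0) using 1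
  · funext d
    have h2 := factorial_mul_cast_choose (𝕜 := 𝕜) 2 d
    simp [Nat.ascFactorial_succ, Nat.factorial] at h2 ⊢
    linear_combination -q ^ d * h2
  · field_simp
    ring

theorem hasSum_pow_three_mul_geometric {q : 𝕜} (hq : ‖q‖ < 1) :
    HasSum (fun d : ℕ ↦ (d : 𝕜) ^ 3 * q ^ d) (q * (1 + 4 * q + q ^ 2) / (1 - q) ^ 4) := by
  have hchoose := fun k ↦ hasSum_choose_mul_geometric_of_norm_lt_one k hq
  have hne : 1 - q ≠ 0 := sub_ne_zero.2 (by rintro rfl; simp at hq)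
  convert! ((((hchoose 3).mul_left 6).sub ((hchoose 2).mul_left 12)).add
    ((hchoose 1).mul_left 7)).sub (hchoose 0) using 1
  · funext d
    have h2 := factorial_mul_cast_choose (𝕜 := 𝕜) 2 d
    have h3 := factorial_mul_cast_choose (𝕜 := 𝕜) 3 d
    simp [Nat.ascFactorial_succ, Nat.factorial] at h2 h3 ⊢
    linear_combination q ^ d * (6 * h2 - h3)
  · field_simp
    ring

theorem hasSum_pow_four_mul_geometric {q : 𝕜} (hq : ‖q‖ < 1) :
    HasSum (fun d : ℕ ↦ (d : 𝕜) ^ 4 * q ^ d)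
      (q * (1 + q) * (1 + 10 * q + q ^ 2) / (1 - q) ^ 5) := by
  have hchoose := fun k ↦ hasSum_choose_mul_geometric_of_norm_lt_one k hq
  have hne : 1 - q ≠ 0 := sub_ne_zero.2 (by rintro rfl; simp at hq)
  convert! (((((hchoose 4).mul_left 24).sub ((hchoose 3).mul_left 60)).add
    ((hchoose 2).mul_left 50)).sub ((hchoose 1).mul_left 15)).add (hchoose 0) using 1
  · funext d
    have h2 := factorial_mul_cast_choose (𝕜 := 𝕜) 2 d
    have h3 := factorial_mul_cast_choose (𝕜 := 𝕜) 3 d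
    have h4 := factorial_mul_cast_choose (𝕜 := 𝕜) 4 d
    simp [Nat.ascFactorial_succ, Nat.factorial] at h2 h3 h4 ⊢
    linear_combination q ^ d * (-25 * h2 + 10 * h3 - h4)
  · field_simp
    ring

end

/-- The sum `∑ d ^ j exp (-d x)`, i.e. the polylogarithm of order `-j` at `exp (-x)`. -/
noncomputable def expPolylog (j : ℕ) (x : ℝ) : ℝ := ∑' d : ℕ, (d : ℝ) ^ j * rexp (-x) ^ d

/-- The function `exp x + exp (-x) - 2`, in terms of which `expPolylog j` is algebraic. -/
noncomputable def coshGap (x : ℝ) : ℝ := rexp x + rexp (-x) - 2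

variable {x : ℝ}

theorem norm_exp_neg_lt_one (hx : 0 < x) : ‖rexp (-x)‖ < 1 := by
  rw [norm_of_nonneg (exp_pos _).le]
  exact exp_lt_one_iff.2 (neg_lt_zero.2 hx)

theorem hasSum_expPolylog (j : ℕ) (hx : 0 < x) :
    HasSum (fun d : ℕ ↦ (d : ℝ) ^ j * rexp (-x) ^ d) (expPolylog j x) :=
  (summable_pow_mul_geometric_of_norm_lt_one j (norm_exp_neg_lt_one hx)).hasSum

theorem expPolylog_nonneg (j : ℕ) (x : ℝ) : 0 ≤ expPolylog j x :=
  tsum_nonneg fun _ ↦ by positivity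

theorem one_sub_exp_neg_sq (x : ℝ) : (1 - rexp (-x)) ^ 2 = rexp (-x) * coshGap x := by
  have hmul : rexp (-x) * rexp x = 1 := by rw [← exp_add]; simp
  rw [coshGap]
  linear_combination -hmul

theorem one_add_exp_neg_sq (x : ℝ) : (1 + rexp (-x)) ^ 2 = rexp (-x) * (4 + coshGap x) := by
  linear_combination one_sub_exp_neg_sq x

theorem sum_le_coshGap (x : ℝ) : x ^ 2 + x ^ 4 / 12 + x ^ 6 / 360 + x ^ 8 / 20160 +
    x ^ 10 / 1814400 ≤ coshGap x := by
  have hcosh : 1 + x ^ 2 / 2 + x ^ 4 / 24 + x ^ 6 / 720 + x ^ 8 / 40320 + x ^ 10 / 3628800 ≤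
      cosh x := by
    simpa [Finset.sum_range_succ, Nat.factorial] using
      sum_le_hasSum (Finset.range 6) (fun n _ ↦ by rw [pow_mul]; positivity) (hasSum_cosh x)
  rw [cosh_eq] at hcosh
  rw [coshGap]
  linarith

theorem coshGap_le (hx : |x| ≤ 1) : coshGap x ≤ x ^ 2 * (1 + x ^ 2 / 3) := by
  have hsq : x ^ 2 ≤ 1 := (sq_le_one_iff_abs_le_one x).2 hx
  have hcosh := cosh_le_exp_half_sq x
  have hexp : rexp (x ^ 2 / 2) ≤
      1 + x ^ 2 / 2 + (x ^ 2 / 2) ^ 2 / 2 + (x ^ 2 / 2) ^ 3 * (3 + 1) / (6 * 3) := by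
    simpa [Finset.sum_range_succ, Nat.factorial] using
      exp_bound' (x := x ^ 2 / 2) (by positivity) (by linarith) (n := 3) (by norm_num)
  rw [cosh_eq] at hcosh
  have hcube : (x ^ 2 / 2) ^ 3 ≤ (x ^ 2 / 2) ^ 2 / 2 := by
    rw [pow_succ]
    nlinarith [sq_nonneg (x ^ 2 / 2)]
  rw [coshGap]
  linarith [sq_nonneg (x ^ 2)]

theorem coshGap_pos (hx : 0 < x) : 0 < coshGap x :=
  lt_of_lt_of_le (by positivity) (sum_le_coshGap x)

theorem expPolylog_one (hx : 0 < x) : expPolylog 1 x = 1 / coshGap x := by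
  have hgap := coshGap_pos hx
  have hsum := hasSum_coe_mul_geometric_of_norm_lt_one (norm_exp_neg_lt_one hx)
  rw [one_sub_exp_neg_sq] at hsum
  rw [(hasSum_expPolylog 1 hx).unique (by simpa using hsum)]
  field_simp

theorem expPolylog_two_sq (hx : 0 < x) :
    expPolylog 2 x ^ 2 = (4 + coshGap x) / coshGap x ^ 3 := by
  have hgap := coshGap_pos hx
  rw [(hasSum_expPolylog 2 hx).unique (hasSum_pow_two_mul_geometric (norm_exp_neg_lt_one hx)),
    div_pow, mul_pow, one_add_exp_neg_sq, pow_right_comm, one_sub_exp_neg_sq]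
  field_simp

theorem expPolylog_three (hx : 0 < x) : expPolylog 3 x = (6 + coshGap x) / coshGap x ^ 2 := by
  have hgap := coshGap_pos hx
  have hnum : 1 + 4 * rexp (-x) + rexp (-x) ^ 2 = rexp (-x) * (6 + coshGap x) := by
    linear_combination one_sub_exp_neg_sq x
  rw [(hasSum_expPolylog 3 hx).unique (hasSum_pow_three_mul_geometric (norm_exp_neg_lt_one hx)),
    hnum, pow_mul (1 - rexp (-x)) 2 2, one_sub_exp_neg_sq]
  field_simp

theorem expPolylog_four_sq (hx : 0 < x) :
    expPolylog 4 x ^ 2 = (4 + coshGap x) * (12 + coshGap x) ^ 2 / coshGap x ^ 5 := by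
  have hgap := coshGap_pos hx
  have hnum : 1 + 10 * rexp (-x) + rexp (-x) ^ 2 = rexp (-x) * (12 + coshGap x) := by
    linear_combination one_sub_exp_neg_sq x
  rw [(hasSum_expPolylog 4 hx).unique (hasSum_pow_four_mul_geometric (norm_exp_neg_lt_one hx)),
    div_pow, mul_pow, mul_pow, one_add_exp_neg_sq, hnum, pow_right_comm, one_sub_exp_neg_sq]
  field_simp

theorem expPolylog_one_le (hx : 0 < x) : expPolylog 1 x ≤ 1 / x ^ 2 := by
  rw [expPolylog_one hx]
  gcongr
  have : 0 ≤ x ^ 4 / 12 + x ^ 6 / 360 + x ^ 8 / 20160 + x ^ 10 / 1814400 := by positivity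
  linarith [sum_le_coshGap x]

theorem le_expPolylog_one (hx : 0 < x) (hx' : x ≤ 1) : 1 / x ^ 2 - 1 / 3 ≤ expPolylog 1 x := by
  rw [expPolylog_one hx, le_div_iff₀ (coshGap_pos hx)]
  have hnonneg : 0 ≤ 1 / x ^ 2 - 1 / 3 := by
    rw [sub_nonneg]
    exact one_div_le_one_div_of_le (by positivity) (by nlinarith)
  calc
    (1 / x ^ 2 - 1 / 3) * coshGap x
    _ ≤ (1 / x ^ 2 - 1 / 3) * (x ^ 2 * (1 + x ^ 2 / 3)) := by
        gcongr
        exact coshGap_le (by rwa [abs_of_pos hx])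
    _ = 1 - x ^ 4 / 9 := by field_simp; ring
    _ ≤ 1 := by linarith [pow_pos hx 4]

-- In the next three bounds, expanding with the lower Taylor polynomial of `coshGap x` plus an
-- error `δ ≥ 0` leaves a polynomial in `x` and `δ` with nonnegative coefficients.
theorem expPolylog_two_le (hx : 0 < x) : expPolylog 2 x ≤ 2 / x ^ 3 := by
  refine le_of_sq_le_sq ?_ (by positivity)
  have hgap := coshGap_pos hx
  rw [expPolylog_two_sq hx, div_pow, div_le_div_iff₀ (by positivity) (by positivity)]
  obtain ⟨δ, hδ, hδx⟩ : ∃ δ : ℝ, 0 ≤ δ ∧ coshGap x = x ^ 2 + x ^ 4 / 12 + δ := by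
    refine ⟨coshGap x - (x ^ 2 + x ^ 4 / 12), ?_, by ring⟩
    have : 0 ≤ x ^ 6 / 360 + x ^ 8 / 20160 + x ^ 10 / 1814400 := by positivity
    linarith [sum_le_coshGap x]
  rw [hδx, ← sub_nonneg]
  ring_nf
  positivity

theorem expPolylog_three_le (hx : 0 < x) : expPolylog 3 x ≤ 6.2 / x ^ 4 := by
  have hgap := coshGap_pos hx
  rw [expPolylog_three hx, div_le_div_iff₀ (by positivity) (by positivity)]
  obtain ⟨δ, hδ, hδx⟩ : ∃ δ : ℝ, 0 ≤ δ ∧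
      coshGap x = x ^ 2 + x ^ 4 / 12 + x ^ 6 / 360 + x ^ 8 / 20160 + δ := by
    refine ⟨coshGap x - (x ^ 2 + x ^ 4 / 12 + x ^ 6 / 360 + x ^ 8 / 20160), ?_, by ring⟩
    have : 0 ≤ x ^ 10 / 1814400 := by positivity
    linarith [sum_le_coshGap x]
  have hsquare : 0 ≤ x ^ 4 * (0.0005 * x ^ 2 * (x ^ 2 - 6) ^ 2) := by positivity
  rw [hδx, ← sub_nonneg]
  refine hsquare.trans ?_
  rw [← sub_nonneg]
  ring_nf
  positivity

theorem expPolylog_four_le (hx : 0 < x) : expPolylog 4 x ≤ 26 / x ^ 5 := by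
  refine le_of_sq_le_sq ?_ (by positivity)
  have hgap := coshGap_pos hx
  rw [expPolylog_four_sq hx, div_pow, div_le_div_iff₀ (by positivity) (by positivity)]
  obtain ⟨δ, hδ, hδx⟩ : ∃ δ : ℝ, 0 ≤ δ ∧ coshGap x = x ^ 2 + x ^ 4 / 12 + x ^ 6 / 360 +
      x ^ 8 / 20160 + x ^ 10 / 1814400 + δ := ⟨_, sub_nonneg.2 (sum_le_coshGap x), by ring⟩
  rw [hδx, ← sub_nonneg]
  ring_nf
  positivity

theorem one_sub_half_sq_mul_one_add_third_cube_le_one {w : ℝ} (hw : 0 ≤ w) (hw' : w ≤ 1) :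
    (1 - w / 2) ^ 2 * (1 + w / 3) ^ 3 ≤ 1 := by
  nlinarith [mul_nonneg hw hw, pow_nonneg hw 3, mul_nonneg (pow_nonneg hw 2) (sub_nonneg.2 hw'),
    mul_nonneg (pow_nonneg hw 3) (sub_nonneg.2 hw'),
    mul_nonneg (pow_nonneg hw 4) (sub_nonneg.2 hw')]

theorem le_expPolylog_two (hx : 0 < x) (hx' : x ≤ 1) :
    2 / x ^ 3 * (1 - x ^ 2 / 2) ≤ expPolylog 2 x := by
  have hsq : x ^ 2 ≤ 1 := pow_le_one₀ hx.le hx'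
  have hgap := coshGap_pos hx
  refine le_of_sq_le_sq ?_ (expPolylog_nonneg 2 x)
  rw [expPolylog_two_sq hx, le_div_iff₀ (by positivity)]
  calc
    (2 / x ^ 3 * (1 - x ^ 2 / 2)) ^ 2 * coshGap x ^ 3
    _ ≤ (2 / x ^ 3 * (1 - x ^ 2 / 2)) ^ 2 * (x ^ 2 * (1 + x ^ 2 / 3)) ^ 3 := by
        gcongr
        exact coshGap_le (by rwa [abs_of_pos hx])
    _ = 4 * ((1 - x ^ 2 / 2) ^ 2 * (1 + x ^ 2 / 3) ^ 3) := by field_simp; ring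
    _ ≤ 4 * 1 := by
        gcongr
        exact one_sub_half_sq_mul_one_add_third_cube_le_one (by positivity) hsq
    _ ≤ 4 + coshGap x := by linarith

theorem one_div_exp_sub_one_le (hx : 0 < x) : 1 / (rexp x - 1) ≤ 1 / x := by
  gcongr
  linarith [add_one_le_exp x]

theorem one_div_exp_sub_one_le_sub_half (hx : 0 < x) :
    1 / (rexp x - 1) ≤ 1 / x - 1 / 2 + x / 8 := by
  have hexp : 1 + x + x ^ 2 / 2 + x ^ 3 / 6 ≤ rexp x := by
    simpa [Finset.sum_range_succ, Nat.factorial] using sum_le_exp_of_nonneg hx.le 4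
  have hle : x * (1 + x / 2 + x ^ 2 / 6) ≤ rexp x - 1 := by linarith
  calc
    1 / (rexp x - 1)
    _ ≤ 1 / (x * (1 + x / 2 + x ^ 2 / 6)) := by gcongr
    _ ≤ (1 - x / 2 + x ^ 2 / 8) / x := by
        rw [div_le_div_iff₀ (by positivity) hx]
        have hquad : 0 ≤ 1 / 24 - x / 48 + x ^ 2 / 48 := by nlinarith [sq_nonneg (x - 1)]
        linarith [mul_nonneg (pow_nonneg hx.le 3) hquad]
    _ = 1 / x - 1 / 2 + x / 8 := by field_simp

end GeometricSums

section CumulantBounds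

open ArithmeticFunction
open scoped ArithmeticFunction.sigma

theorem le_sigma_one (k : ℕ) : k ≤ σ 1 k := by
  rcases Nat.eq_zero_or_pos k with rfl | hk
  · simp
  · rw [sigma_one_apply]
    exact Finset.single_le_sum_of_canonicallyOrdered (f := fun d ↦ d)
      (Nat.mem_divisors_self k hk.ne')

theorem le_logGenDrop_of_sigma_ge {r : ℝ} (hr : 0 ≤ r) (hr' : r < 1) (θ : ℝ) :
    r * (1 - cos θ) * (1 + r) / ((1 - r) * ((1 - r) ^ 2 + 2 * r * (1 - cos θ))) ≤
      logGenDrop r θ := by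
  refine hasSum_le (fun k ↦ ?_) (hasSum_pow_mul_one_sub_cos hr hr' θ)
    (summable_logGenDrop hr hr' θ).hasSum
  rcases Nat.eq_zero_or_pos k with rfl | hk
  · simp
  · have hratio : 1 ≤ (σ 1 k : ℝ) / k :=
      (one_le_div (by exact_mod_cast hk)).2 (by exact_mod_cast le_sigma_one k)
    exact mul_le_mul_of_nonneg_right (le_mul_of_one_le_left (by positivity) hratio)
      (sub_nonneg.2 (cos_le_one _))

theorem le_logGenDrop_exp {t : ℝ} (ht : 0 < t) (ht' : t < 1) (θ : ℝ) :
    (1 - t) * (2 - t) * (1 - cos θ) / (t * (t ^ 2 + 2 * (1 - cos θ))) ≤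
      logGenDrop (rexp (-t)) θ := by
  have hr0 := exp_pos (-t)
  have hr1 : rexp (-t) < 1 := exp_lt_one_iff.2 (neg_lt_zero.2 ht)
  have hrt : 1 - t ≤ rexp (-t) := one_sub_le_exp_neg t
  refine le_trans ?_ (le_logGenDrop_of_sigma_ge hr0.le hr1 θ)
  set r := rexp (-t)
  have hcos : 0 ≤ 1 - cos θ := sub_nonneg.2 (cos_le_one θ)
  have : 0 < 1 - r := sub_pos.2 hr1
  gcongr ?_ / (?_ * ?_)
  · have hmul : (1 - t) * (2 - t) ≤ r * (1 + r) :=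
      mul_le_mul hrt (by linarith) (by linarith) hr0.le
    linarith [mul_le_mul_of_nonneg_right hmul hcos]
  · linarith
  · have hsq : (1 - r) ^ 2 ≤ t ^ 2 := by gcongr; linarith
    linarith [mul_le_mul_of_nonneg_right hr1.le hcos]

theorem hasSum_succ_of_hasSum_of_zero {f : ℕ → ℝ} {a : ℝ} (h : HasSum f a) (h0 : f 0 = 0) :
    HasSum (fun k ↦ f (k + 1)) a := by
  simpa [h0] using (hasSum_nat_add_iff' 1).2 h

theorem hasSum_of_hasSum_sigma_mul {u g : ℕ → ℝ} {a : ℝ} (hu : ∀ k, 0 ≤ u k)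
    (ha : HasSum (fun k ↦ (σ 1 k : ℝ) * u k) a)
    (hg : ∀ m : ℕ, HasSum (fun d : ℕ ↦ (d : ℝ) * u ((m + 1) * d)) (g m)) : HasSum g a := by
  have ha' : HasSum (fun k : ℕ+ ↦ (σ 1 k : ℝ) * u k) a :=
    Equiv.pnatEquivNat.symm.hasSum_iff.1 (hasSum_succ_of_hasSum_of_zero ha (by simp))
  let F : (Σ n : ℕ+, Nat.divisorsAntidiagonal n) → ℝ := fun x ↦ (x.2.1.2 : ℝ) * u x.1
  have hfiber (n : ℕ+) : HasSum (fun c ↦ F ⟨n, c⟩) ((σ 1 n : ℝ) * u n) := by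
    have hsum : ∑ c : Nat.divisorsAntidiagonal (n : ℕ), F ⟨n, c⟩ = (σ 1 n : ℝ) * u n := by
      simp only [F]
      rw [Finset.univ_eq_attach, Finset.sum_attach _ (fun c : ℕ × ℕ ↦ (c.2 : ℝ) * u n),
        ← Finset.sum_mul, sigma_one_apply, Nat.cast_sum,
        Nat.sum_divisorsAntidiagonal' (fun _ j : ℕ ↦ (j : ℝ))]
    rw [← hsum]
    exact hasSum_fintype _
  have hsF : Summable F :=
    (summable_sigma_of_nonneg fun x ↦ mul_nonneg (Nat.cast_nonneg _) (hu _)).2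
      ⟨fun n ↦ (hfiber n).summable, ha'.summable.congr fun n ↦ (hfiber n).tsum_eq.symm⟩
  have hprod := sigmaAntidiagonalEquivProd.symm.hasSum_iff.2 (ha'.sigma_of_hasSum hfiber hsF)
  have hgp : HasSum (fun m : ℕ+ ↦ g (Equiv.pnatEquivNat m)) a := by
    refine hprod.prod_fiberwise fun m ↦ Equiv.pnatEquivNat.symm.hasSum_iff.1 ?_
    refine (hasSum_succ_of_hasSum_of_zero (hg (Equiv.pnatEquivNat m)) (by simp)).congr_fun
      fun d ↦ ?_
    simp [F, sigmaAntidiagonalEquivProd, Equiv.pnatEquivNat]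
  exact (Equiv.pnatEquivNat.symm.hasSum_iff.2 hgp).congr_fun fun m ↦ by simp

theorem hasSum_one_div_succ_sq : HasSum (fun m : ℕ ↦ 1 / ((m : ℝ) + 1) ^ 2) (π ^ 2 / 6) := by
  simpa using hasSum_succ_of_hasSum_of_zero hasSum_zeta_two (by simp)

theorem pi_sq_div_six_sub_le {M : ℕ} (hM : M ≠ 0) :
    π ^ 2 / 6 - 1 / M ≤ ∑ m ∈ Finset.range M, 1 / ((m : ℝ) + 1) ^ 2 := by
  rw [sub_le_iff_le_add']
  refine le_of_tendsto hasSum_one_div_succ_sq.tendsto_sum_nat ?_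
  filter_upwards [Filter.eventually_ge_atTop M] with N hN
  have htail := sum_Ioc_inv_sq_le_sub (α := ℝ) hM hN
  rw [← Finset.sum_range_add_sum_Ico _ hN, add_comm]
  gcongr
  calc
    ∑ m ∈ Finset.Ico M N, 1 / ((m : ℝ) + 1) ^ 2
    _ = ∑ i ∈ Finset.Ioc M N, ((i : ℝ) ^ 2)⁻¹ := by
        rw [← Finset.Ico_add_one_add_one_eq_Ioc,
          ← Finset.sum_Ico_add' (fun i : ℕ ↦ ((i : ℝ) ^ 2)⁻¹) M N 1]
        simp
    _ ≤ 1 / M := by rw [one_div]; linarith [inv_nonneg.2 (Nat.cast_nonneg (α := ℝ) N)]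

variable {t : ℝ}

theorem exp_neg_pow_succ (t : ℝ) (m : ℕ) : rexp (-t) ^ (m + 1) = rexp (-(((m : ℝ) + 1) * t)) := by
  rw [← exp_nat_mul]
  push_cast
  ring_nf

theorem hasSum_logGenCumulant_exp (j : ℕ) (ht : 0 < t) :
    HasSum (fun m : ℕ ↦ ((m : ℝ) + 1) ^ j * expPolylog (j + 1) (((m : ℝ) + 1) * t))
      (logGenCumulant j (rexp (-t))) := by
  have hr : rexp (-t) < 1 := exp_lt_one_iff.2 (neg_lt_zero.2 ht)
  refine hasSum_of_hasSum_sigma_mul (u := fun k ↦ (k : ℝ) ^ j * rexp (-t) ^ k)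
    (fun k ↦ by positivity)
    ((summable_sigma_mul_pow (exp_pos _).le hr j).hasSum.congr_fun
      fun k ↦ (mul_assoc _ _ _).symm) fun m ↦ ?_
  refine ((hasSum_expPolylog (j + 1) (by positivity : 0 < ((m : ℝ) + 1) * t)).mul_left
    _).congr_fun fun d ↦ ?_
  rw [pow_mul, exp_neg_pow_succ, Nat.cast_mul, mul_pow, pow_succ]
  push_cast
  ring

theorem hasSum_logGen_exp (ht : 0 < t) :
    HasSum (fun m : ℕ ↦ 1 / ((m : ℝ) + 1) * (1 / (rexp (((m : ℝ) + 1) * t) - 1)))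
      (logGen (rexp (-t))) := by
  have hr : rexp (-t) < 1 := exp_lt_one_iff.2 (neg_lt_zero.2 ht)
  refine hasSum_of_hasSum_sigma_mul (u := fun k ↦ (k : ℝ)⁻¹ * rexp (-t) ^ k)
    (fun k ↦ by positivity)
    ((summable_sigma_div_mul_pow (exp_pos _).le hr).hasSum.congr_fun fun k ↦ by ring) fun m ↦ ?_
  have hx : 0 < ((m : ℝ) + 1) * t := by positivity
  set x := ((m : ℝ) + 1) * t
  have hgeom : HasSum (fun d : ℕ ↦ rexp (-x) ^ d - if d = 0 then 1 else 0)
      (1 / (rexp x - 1)) := by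
    have hsum := (hasSum_geometric_of_norm_lt_one (norm_exp_neg_lt_one hx)).sub
      (hasSum_ite_eq (0 : ℕ) (1 : ℝ))
    convert! hsum using 1
    have hexp : 0 < rexp x - 1 := sub_pos.2 (one_lt_exp_iff.2 hx)
    rw [exp_neg]
    field_simp
    ring
  refine (hgeom.mul_left (1 / ((m : ℝ) + 1))).congr_fun fun d ↦ ?_
  rcases Nat.eq_zero_or_pos d with rfl | hd
  · simp
  · rw [if_neg hd.ne', pow_mul, exp_neg_pow_succ]
    push_cast
    field_simp
    ring

theorem logGenCumulant_exp_le {j : ℕ} {C : ℝ}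
    (hC : ∀ x, 0 < x → expPolylog (j + 1) x ≤ C / x ^ (j + 2)) (ht : 0 < t) :
    logGenCumulant j (rexp (-t)) ≤ C * (π ^ 2 / 6) / t ^ (j + 2) := by
  refine hasSum_le (fun m ↦ ?_) (hasSum_logGenCumulant_exp j ht)
    ((hasSum_one_div_succ_sq.mul_left C).div_const (t ^ (j + 2)))
  calc
    ((m : ℝ) + 1) ^ j * expPolylog (j + 1) (((m : ℝ) + 1) * t)
    _ ≤ ((m : ℝ) + 1) ^ j * (C / (((m : ℝ) + 1) * t) ^ (j + 2)) :=
        mul_le_mul_of_nonneg_left (hC _ (by positivity)) (by positivity)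
    _ = C * (1 / ((m : ℝ) + 1) ^ 2) / t ^ (j + 2) := by
        rw [mul_pow, pow_add _ j 2]
        field_simp

theorem logGenCumulant_zero_exp_le (ht : 0 < t) :
    logGenCumulant 0 (rexp (-t)) ≤ π ^ 2 / 6 / t ^ 2 := by
  simpa using logGenCumulant_exp_le (j := 0) (fun _ ↦ expPolylog_one_le) ht

theorem logGenCumulant_one_exp_le (ht : 0 < t) :
    logGenCumulant 1 (rexp (-t)) ≤ π ^ 2 / 3 / t ^ 3 := by
  have hle := logGenCumulant_exp_le (j := 1) (fun _ ↦ expPolylog_two_le) ht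
  rwa [show 2 * (π ^ 2 / 6) = π ^ 2 / 3 by ring] at hle

theorem logGenCumulant_two_exp_le (ht : 0 < t) :
    logGenCumulant 2 (rexp (-t)) ≤ 6.2 * (π ^ 2 / 6) / t ^ 4 :=
  logGenCumulant_exp_le (fun _ ↦ expPolylog_three_le) ht

theorem logGenCumulant_three_exp_le (ht : 0 < t) :
    logGenCumulant 3 (rexp (-t)) ≤ 26 * (π ^ 2 / 6) / t ^ 5 :=
  logGenCumulant_exp_le (fun _ ↦ expPolylog_four_le) ht

theorem sum_le_logGenCumulant_exp (j : ℕ) (ht : 0 < t) (M : ℕ) :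
    ∑ m ∈ Finset.range M, ((m : ℝ) + 1) ^ j * expPolylog (j + 1) (((m : ℝ) + 1) * t) ≤
      logGenCumulant j (rexp (-t)) :=
  sum_le_hasSum _ (fun _ _ ↦ mul_nonneg (by positivity) (expPolylog_nonneg _ _))
    (hasSum_logGenCumulant_exp j ht)

theorem le_logGenCumulant_one_exp (ht : 0 < t) (ht' : t ≤ 1 / 70) :
    3.15 / t ^ 3 ≤ logGenCumulant 1 (rexp (-t)) := by
  refine le_trans ?_ (sum_le_logGenCumulant_exp 1 ht 16)
  calc
    3.15 / t ^ 3
    _ ≤ 2 / t ^ 3 * ∑ m ∈ Finset.range 16, (1 / ((m : ℝ) + 1) ^ 2 - (1 / 70) ^ 2 / 2) := by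
        rw [div_mul_eq_mul_div]
        gcongr
        norm_num [Finset.sum_range_succ]
    _ = ∑ m ∈ Finset.range 16, 2 / t ^ 3 * (1 / ((m : ℝ) + 1) ^ 2 - (1 / 70) ^ 2 / 2) :=
        Finset.mul_sum _ _ _
    _ ≤ _ := Finset.sum_le_sum fun m hm ↦ ?_
  have hm' : (m : ℝ) + 1 ≤ 16 := by exact_mod_cast Finset.mem_range.1 hm
  have hx : ((m : ℝ) + 1) * t ≤ 16 * (1 / 70) := by gcongr
  calc
    2 / t ^ 3 * (1 / ((m : ℝ) + 1) ^ 2 - (1 / 70) ^ 2 / 2)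
    _ ≤ 2 / t ^ 3 * (1 / ((m : ℝ) + 1) ^ 2 - t ^ 2 / 2) := by gcongr
    _ = ((m : ℝ) + 1) ^ 1 *
          (2 / (((m : ℝ) + 1) * t) ^ 3 * (1 - (((m : ℝ) + 1) * t) ^ 2 / 2)) := by
        field_simp
    _ ≤ ((m : ℝ) + 1) ^ 1 * expPolylog (1 + 1) (((m : ℝ) + 1) * t) := by
        gcongr
        exact le_expPolylog_two (by positivity) (by linarith)

theorem le_logGenCumulant_zero_exp (ht : 0 < t) (ht' : t ≤ 1 / 70) :
    π ^ 2 / 6 / t ^ 2 - 1.35 / t ≤ logGenCumulant 0 (rexp (-t)) := by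
  obtain ⟨M, hM⟩ : ∃ M : ℕ, M = ⌊1 / t⌋₊ := ⟨_, rfl⟩
  have hMle : (M : ℝ) ≤ 1 / t := hM ▸ Nat.floor_le (by positivity)
  have hltM : 1 / t < M + 1 := hM ▸ Nat.lt_floor_add_one _
  have h70 : 70 ≤ 1 / t := by rw [le_div_iff₀ ht]; linarith
  have hM0 : (0 : ℝ) < M := by linarith
  have hinv : 1 / (M : ℝ) / t ^ 2 ≤ 70 / 69 * (1 / t) := by
    have : 69 / 70 * (1 / t) ≤ M := by linarith
    calc
      1 / (M : ℝ) / t ^ 2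
      _ ≤ 1 / (69 / 70 * (1 / t)) / t ^ 2 := by gcongr
      _ = 70 / 69 * (1 / t) := by field_simp
  refine le_trans ?_ (sum_le_logGenCumulant_exp 0 ht M)
  calc
    π ^ 2 / 6 / t ^ 2 - 1.35 / t
    _ ≤ (π ^ 2 / 6 - 1 / M) / t ^ 2 - M / 3 := by
        rw [sub_div, show 1.35 / t = 1.35 * (1 / t) by ring]
        linarith
    _ ≤ (∑ m ∈ Finset.range M, 1 / ((m : ℝ) + 1) ^ 2) / t ^ 2 - M / 3 := by
        gcongr
        exact pi_sq_div_six_sub_le (by exact_mod_cast hM0.ne')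
    _ = ∑ m ∈ Finset.range M, (1 / (((m : ℝ) + 1) * t) ^ 2 - 1 / 3) := by
        simp only [Finset.sum_sub_distrib, Finset.sum_div, mul_pow, div_div, Finset.sum_const,
          Finset.card_range, nsmul_eq_mul]
        ring
    _ ≤ _ := Finset.sum_le_sum fun m hm ↦ ?_
  have hm' : (m : ℝ) + 1 ≤ 1 / t :=
    le_trans (by exact_mod_cast Finset.mem_range.1 hm) hMle
  rw [pow_zero, one_mul]
  exact le_expPolylog_one (by positivity) ((le_div_iff₀ ht).1 hm')

theorem logGen_exp_le (ht : 0 < t) : logGen (rexp (-t)) ≤ π ^ 2 / 6 / t := by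
  refine hasSum_le (fun m ↦ ?_) (hasSum_logGen_exp ht) (hasSum_one_div_succ_sq.div_const t)
  calc
    1 / ((m : ℝ) + 1) * (1 / (rexp (((m : ℝ) + 1) * t) - 1))
    _ ≤ 1 / ((m : ℝ) + 1) * (1 / (((m : ℝ) + 1) * t)) :=
        mul_le_mul_of_nonneg_left (one_div_exp_sub_one_le (by positivity)) (by positivity)
    _ = 1 / ((m : ℝ) + 1) ^ 2 / t := by field_simp

theorem logGen_exp_le_sub_sum (ht : 0 < t) (M : ℕ) : logGen (rexp (-t)) ≤
    π ^ 2 / 6 / t - ∑ m ∈ Finset.range M, (1 / 2 * (1 / ((m : ℝ) + 1)) - t / 8) := by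
  have hhead := hasSum_sum_of_ne_finset_zero (s := Finset.range M) (L := .unconditional ℕ)
    (f := fun m : ℕ ↦ if m ∈ Finset.range M then 1 / 2 * (1 / ((m : ℝ) + 1)) - t / 8 else 0)
    fun m hm ↦ if_neg hm
  rw [Finset.sum_congr rfl fun m hm ↦ if_pos hm] at hhead
  refine hasSum_le (fun m ↦ ?_) (hasSum_logGen_exp ht)
    ((hasSum_one_div_succ_sq.div_const t).sub hhead)
  have hx : 0 < ((m : ℝ) + 1) * t := by positivity
  split_ifs
  · calc
      1 / ((m : ℝ) + 1) * (1 / (rexp (((m : ℝ) + 1) * t) - 1))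
      _ ≤ 1 / ((m : ℝ) + 1) * (1 / (((m : ℝ) + 1) * t) - 1 / 2 + ((m : ℝ) + 1) * t / 8) :=
          mul_le_mul_of_nonneg_left (one_div_exp_sub_one_le_sub_half hx) (by positivity)
      _ = 1 / ((m : ℝ) + 1) ^ 2 / t - (1 / 2 * (1 / ((m : ℝ) + 1)) - t / 8) := by
          field_simp
          ring
  · calc
      1 / ((m : ℝ) + 1) * (1 / (rexp (((m : ℝ) + 1) * t) - 1))
      _ ≤ 1 / ((m : ℝ) + 1) * (1 / (((m : ℝ) + 1) * t)) :=
          mul_le_mul_of_nonneg_left (one_div_exp_sub_one_le hx) (by positivity)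
      _ = 1 / ((m : ℝ) + 1) ^ 2 / t - 0 := by field_simp; ring

theorem logGen_exp_le_sub_log (ht : 0 < t) :
    logGen (rexp (-t)) ≤ π ^ 2 / 6 / t - 1 / 2 * log (4 / t) + 1 / 2 := by
  obtain ⟨M, hM⟩ : ∃ M : ℕ, M = ⌊4 / t⌋₊ := ⟨_, rfl⟩
  have hMle : (M : ℝ) ≤ 4 / t := hM ▸ Nat.floor_le (by positivity)
  have hltM : 4 / t < ((M + 1 : ℕ) : ℝ) := by exact_mod_cast hM ▸ Nat.lt_floor_add_one (4 / t)
  have hlog : log (4 / t) ≤ ∑ m ∈ Finset.range M, 1 / ((m : ℝ) + 1) := calc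
    log (4 / t)
    _ ≤ log ((M + 1 : ℕ) : ℝ) := log_le_log (by positivity) hltM.le
    _ ≤ (harmonic M : ℝ) := log_add_one_le_harmonic M
    _ = ∑ m ∈ Finset.range M, 1 / ((m : ℝ) + 1) := by simp [harmonic]
  have hMt : M * (t / 8) ≤ 1 / 2 := calc
    M * (t / 8)
    _ ≤ 4 / t * (t / 8) := by gcongr
    _ = 1 / 2 := by field_simp; norm_num
  have hle := logGen_exp_le_sub_sum ht M
  rw [Finset.sum_sub_distrib, ← Finset.mul_sum, Finset.sum_const, Finset.card_range,
    nsmul_eq_mul] at hle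
  linarith

end CumulantBounds

section SaddlePoint

open scoped ArithmeticFunction.sigma

theorem continuousOn_logGenCumulant {j : ℕ} {b : ℝ} (hb : 0 ≤ b) (hb' : b < 1) :
    ContinuousOn (logGenCumulant j) (Set.Icc 0 b) := by
  refine continuousOn_tsum (fun k ↦ by fun_prop) (summable_sigma_mul_pow hb hb' j) fun k x hx ↦ ?_
  have hx0 := hx.1
  rw [Real.norm_of_nonneg (by positivity)]
  gcongr
  exact hx.2

theorem logGenCumulant_zero_right (j : ℕ) : logGenCumulant j 0 = 0 := by
  refine (tsum_congr fun k ↦ ?_).trans tsum_zero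
  rcases Nat.eq_zero_or_pos k with rfl | hk
  · simp
  · simp [hk.ne']

theorem exists_logGenCumulant_zero_eq {x : ℝ} (hx : 8194 ≤ x) :
    ∃ t, 0 < t ∧ t ≤ 1 / 70 ∧ logGenCumulant 0 (rexp (-t)) = x := by
  have hx0 : 0 < x := by linarith
  have hb : rexp (-(1 / x)) < 1 := exp_lt_one_iff.2 (by simpa using hx0)
  have hle : x ≤ logGenCumulant 0 (rexp (-(1 / x))) := by
    refine le_trans ?_ (le_logGenCumulant_zero_exp (by positivity) (by gcongr; linarith))
    have heq : π ^ 2 / 6 / (1 / x) ^ 2 - 1.35 / (1 / x) = π ^ 2 / 6 * x ^ 2 - 1.35 * x := by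
      field_simp
    have hpi : 1 ≤ π ^ 2 / 6 := by nlinarith [pi_gt_three]
    rw [heq]
    nlinarith
  obtain ⟨r, hr, hrx⟩ := intermediate_value_Icc (exp_pos _).le
    (continuousOn_logGenCumulant (j := 0) (exp_pos _).le hb)
    ⟨(logGenCumulant_zero_right 0).trans_le hx0.le, hle⟩
  have hr0 : 0 < r := lt_of_le_of_ne hr.1 fun h ↦ by
    rw [← h, logGenCumulant_zero_right] at hrx
    linarith
  have ht : 0 < -log r := neg_pos.2 (log_neg hr0 (hr.2.trans_lt hb))
  have hrt : rexp (- -log r) = r := by rw [neg_neg, exp_log hr0]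
  refine ⟨-log r, ht, ?_, by rw [hrt, hrx]⟩
  have hupper := logGenCumulant_zero_exp_le ht
  rw [hrt, hrx, le_div_iff₀ (by positivity)] at hupper
  by_contra! hlt
  nlinarith [pi_lt_d4, pi_pos]

set_option exponentiation.threshold 400 in
theorem card_partition_lt_two_pow {n : ℕ} (hn : n < 8195) :
    Fintype.card (Nat.Partition n) < 2 ^ 340 := by
  have hle := p_mul_pow_le (r := rexp (-(1 / 70))) (exp_pos _)
    (exp_lt_one_iff.2 (by norm_num)) n
  rw [← exp_nat_mul, ← le_div_iff₀ (exp_pos _), ← exp_sub] at hle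
  have hn' : (n : ℝ) ≤ 8194 := by exact_mod_cast Nat.lt_succ_iff.1 hn
  have hpow : (2 : ℝ) ^ 340 = rexp (340 * log 2) := by
    rw [mul_comm, exp_mul, exp_log (by norm_num)]
    norm_cast
  have hlt : p n < 2 ^ 340 := by
    refine hle.trans_lt ?_
    rw [hpow, exp_lt_exp]
    nlinarith [logGen_exp_le (t := 1 / 70) (by norm_num), log_two_gt_d9, pi_lt_d4, pi_pos]
  rw [p] at hlt
  exact_mod_cast hlt

theorem le_logGenDrop_exp_of_le_pi {t θ : ℝ} (ht : 0 < t) (ht' : t ≤ 1 / 70) (hθ : 0.8 * t ≤ θ)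
    (hθ' : θ ≤ π) : 0.38 / t ≤ logGenDrop (rexp (-t)) θ := by
  refine le_trans ?_ (le_logGenDrop_exp ht (by linarith) θ)
  have hcos : cos θ ≤ cos (0.8 * t) := cos_le_cos_of_nonneg_of_le_pi (by positivity) hθ' hθ
  obtain ⟨s, hs⟩ : ∃ s, s = 1 - cos θ := ⟨_, rfl⟩
  have hst : 0.3199 * t ^ 2 ≤ s := by
    have hsmall : t ^ 2 ≤ (1 / 70) ^ 2 := by gcongr
    nlinarith [cos_le_one_sub_sq_add_pow_four (0.8 * t), sq_nonneg t]
  have hs0 : 0 ≤ s := le_trans (by positivity) hst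
  have hprod : 1.957 ≤ (1 - t) * (2 - t) := by nlinarith
  have hratio : 0.38 * (t ^ 2 + 2 * s) ≤ (1 - t) * (2 - t) * s := by
    linarith [mul_le_mul_of_nonneg_right hprod hs0]
  rw [← hs, div_le_div_iff₀ ht (by positivity)]
  linarith [mul_le_mul_of_nonneg_left hratio ht.le]

end SaddlePoint

section GaussianMoments

open Nat (doubleFactorial)

variable {b : ℝ}

theorem integral_Ioi_pow_mul_exp_neg_mul_sq (hb : 0 < b) (k : ℕ) :
    ∫ θ in Set.Ioi (0 : ℝ), θ ^ (2 * k) * rexp (-b * θ ^ 2) =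
      doubleFactorial (2 * k - 1) / 2 ^ (k + 1) * √(π / b) / b ^ k := by
  have hk : (-1 : ℝ) < 2 * k := by linarith [Nat.cast_nonneg (α := ℝ) k]
  have h := integral_rpow_mul_exp_neg_mul_rpow (p := 2) (by norm_num) hk hb
  rw [show ((2 * k : ℝ) + 1) / 2 = k + 1 / 2 by ring, Gamma_nat_add_half,
    show -(2 * k + 1 : ℝ) / 2 = -k - 1 / 2 by ring, rpow_sub hb, rpow_neg hb.le, rpow_natCast,
    ← sqrt_eq_rpow] at h
  rw [sqrt_div pi_pos.le, pow_succ]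
  convert h using 1
  · norm_cast
  · field_simp

theorem integrableOn_Ioi_pow_mul_exp_neg_mul_sq (hb : 0 < b) (k : ℕ) :
    MeasureTheory.IntegrableOn (fun θ : ℝ ↦ θ ^ k * rexp (-b * θ ^ 2)) (Set.Ioi 0) := by
  have hk : (-1 : ℝ) < k := by linarith [Nat.cast_nonneg (α := ℝ) k]
  simpa using integrableOn_rpow_mul_exp_neg_mul_sq hb hk

theorem integral_pow_mul_exp_neg_mul_sq_le (hb : 0 < b) (k : ℕ) {a : ℝ} (ha : 0 ≤ a) :
    ∫ θ in (0 : ℝ)..a, θ ^ (2 * k) * rexp (-b * θ ^ 2) ≤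
      doubleFactorial (2 * k - 1) / 2 ^ (k + 1) * √(π / b) / b ^ k := by
  rw [← integral_Ioi_pow_mul_exp_neg_mul_sq hb, intervalIntegral.integral_of_le ha]
  refine MeasureTheory.setIntegral_mono_set (integrableOn_Ioi_pow_mul_exp_neg_mul_sq hb _) ?_
    Set.Ioc_subset_Ioi_self.eventuallyLE
  exact Filter.Eventually.of_forall fun θ ↦
    mul_nonneg ((even_two_mul k).pow_nonneg θ) (exp_pos _).le

theorem integral_Ioi_le_integral {f : ℝ → ℝ} {a : ℝ} (ha : 0 ≤ a)
    (hf : MeasureTheory.IntegrableOn f (Set.Ioi 0)) (h : ∀ θ, a < θ → f θ ≤ 0) :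
    ∫ θ in Set.Ioi (0 : ℝ), f θ ≤ ∫ θ in (0 : ℝ)..a, f θ := by
  rw [← intervalIntegral.integral_interval_add_Ioi hf (hf.mono_set (Set.Ioi_subset_Ioi ha))]
  linarith [MeasureTheory.setIntegral_nonpos (μ := MeasureTheory.volume) measurableSet_Ioi h]

-- `1 - θ ^ 2 / 9 ≤ 0` beyond `π`, so the integral of the minorant can be taken over the half-line.
theorem le_integral_exp_neg_mul_sq (hb : 0 < b) :
    √(π / b) * (1 / 2 - 1 / (36 * b)) ≤ ∫ θ in (0 : ℝ)..π, rexp (-b * θ ^ 2) := by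
  have i₀ := integrableOn_Ioi_pow_mul_exp_neg_mul_sq hb (2 * 0)
  have i₁ := (integrableOn_Ioi_pow_mul_exp_neg_mul_sq hb (2 * 1)).const_mul (1 / 9)
  have hmoments := MeasureTheory.integral_sub i₀ i₁
  rw [MeasureTheory.integral_const_mul, integral_Ioi_pow_mul_exp_neg_mul_sq hb,
    integral_Ioi_pow_mul_exp_neg_mul_sq hb] at hmoments
  calc
    √(π / b) * (1 / 2 - 1 / (36 * b))
    _ = ∫ θ in Set.Ioi (0 : ℝ),
          (θ ^ (2 * 0) * rexp (-b * θ ^ 2) - 1 / 9 * (θ ^ (2 * 1) * rexp (-b * θ ^ 2))) := by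
        rw [hmoments]
        norm_num
        field_simp
        ring
    _ ≤ ∫ θ in (0 : ℝ)..π,
          (θ ^ (2 * 0) * rexp (-b * θ ^ 2) - 1 / 9 * (θ ^ (2 * 1) * rexp (-b * θ ^ 2))) := by
        refine integral_Ioi_le_integral pi_pos.le (i₀.sub i₁) fun θ hθ ↦ ?_
        have hθ' : 9 ≤ θ ^ 2 := by nlinarith [pi_gt_three]
        linarith [mul_nonneg (sub_nonneg.2 hθ') (exp_pos (-b * θ ^ 2)).le]
    _ ≤ _ := by
        refine intervalIntegral.integral_mono_on pi_pos.le
          (Continuous.intervalIntegrable (by fun_prop) _ _)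
          (Continuous.intervalIntegrable (by fun_prop) _ _) fun θ _ ↦ ?_
        linarith [mul_nonneg (sq_nonneg θ) (exp_pos (-b * θ ^ 2)).le]

theorem le_integral_one_sub_cos_mul_exp_neg_mul_sq (hb : 0 < b) :
    √(π / b) * (1 / (8 * b) - 1 / (48 * b ^ 2)) ≤
      ∫ θ in (0 : ℝ)..π, (1 - cos θ) * rexp (-b * θ ^ 2) := by
  have i₁ := (integrableOn_Ioi_pow_mul_exp_neg_mul_sq hb (2 * 1)).const_mul (1 / 2)
  have i₂ := (integrableOn_Ioi_pow_mul_exp_neg_mul_sq hb (2 * 2)).const_mul (1 / 18)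
  have hmoments := MeasureTheory.integral_sub i₁ i₂
  rw [MeasureTheory.integral_const_mul, MeasureTheory.integral_const_mul,
    integral_Ioi_pow_mul_exp_neg_mul_sq hb, integral_Ioi_pow_mul_exp_neg_mul_sq hb] at hmoments
  calc
    √(π / b) * (1 / (8 * b) - 1 / (48 * b ^ 2))
    _ = ∫ θ in Set.Ioi (0 : ℝ), (1 / 2 * (θ ^ (2 * 1) * rexp (-b * θ ^ 2)) -
          1 / 18 * (θ ^ (2 * 2) * rexp (-b * θ ^ 2))) := by
        rw [hmoments]
        norm_num [doubleFactorial]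
        field_simp
        ring
    _ ≤ ∫ θ in (0 : ℝ)..π, (1 / 2 * (θ ^ (2 * 1) * rexp (-b * θ ^ 2)) -
          1 / 18 * (θ ^ (2 * 2) * rexp (-b * θ ^ 2))) := by
        refine integral_Ioi_le_integral pi_pos.le (i₁.sub i₂) fun θ hθ ↦ ?_
        have hθ' : 9 ≤ θ ^ 2 := by nlinarith [pi_gt_three]
        linarith [mul_nonneg (mul_nonneg (sq_nonneg θ) (sub_nonneg.2 hθ'))
          (exp_pos (-b * θ ^ 2)).le]
    _ ≤ _ := by
        refine intervalIntegral.integral_mono_on pi_pos.le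
          (Continuous.intervalIntegrable (by fun_prop) _ _)
          (Continuous.intervalIntegrable (by fun_prop) _ _) fun θ _ ↦ ?_
        have hcos : θ ^ 2 / 2 - θ ^ 4 / 18 ≤ 1 - cos θ := by
          linarith [cos_le_one_sub_sq_add_pow_four θ, sq_nonneg (θ ^ 2)]
        linarith [mul_le_mul_of_nonneg_right hcos (exp_pos (-b * θ ^ 2)).le]

theorem integral_le_of_forall_le {f f₁ f₂ f₃ : ℝ → ℝ} (hf : Continuous f) (hf₁ : Continuous f₁)
    (hf₂ : Continuous f₂) (hf₃ : Continuous f₃) {a : ℝ} (ha : 0 ≤ a) {c₁ c₂ c₃ : ℝ}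
    (h : ∀ θ, 0 ≤ θ → θ ≤ a → f θ ≤ c₁ * f₁ θ + c₂ * f₂ θ + c₃ * f₃ θ) :
    ∫ θ in (0 : ℝ)..a, f θ ≤ c₁ * (∫ θ in (0 : ℝ)..a, f₁ θ) + c₂ * (∫ θ in (0 : ℝ)..a, f₂ θ) +
      c₃ * (∫ θ in (0 : ℝ)..a, f₃ θ) := by
  rw [← intervalIntegral.integral_const_mul, ← intervalIntegral.integral_const_mul,
    ← intervalIntegral.integral_const_mul, ← intervalIntegral.integral_add,
    ← intervalIntegral.integral_add]
  · exact intervalIntegral.integral_mono_on ha (hf.intervalIntegrable _ _)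
      (Continuous.intervalIntegrable (by fun_prop) _ _) fun θ hθ ↦ h θ hθ.1 hθ.2
  all_goals exact Continuous.intervalIntegrable (by fun_prop) _ _

end GaussianMoments

section ExponentialSmallness

theorem exp_neg_div_le {ρ t t₀ : ℝ} {k : ℕ} (ht : 0 < t) (ht₀ : t ≤ t₀) (hk : k * t₀ ≤ ρ) :
    rexp (-ρ / t) ≤ rexp (-(ρ / t₀)) * (t / t₀) ^ k := by
  have ht₀' : 0 < t₀ := ht.trans_le ht₀
  have hratio : 1 ≤ t₀ / t := (one_le_div ht).2 ht₀
  have hpow : (t₀ / t) ^ k ≤ rexp (ρ / t - ρ / t₀) := calc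
    (t₀ / t) ^ k
    _ ≤ rexp (t₀ / t - 1) ^ k := by
        gcongr
        linarith [add_one_le_exp (t₀ / t - 1)]
    _ = rexp (k * (t₀ / t - 1)) := by rw [exp_nat_mul]
    _ ≤ rexp (ρ / t₀ * (t₀ / t - 1)) := by
        gcongr
        rwa [le_div_iff₀ ht₀']
    _ = _ := by
        congr 1
        field_simp
  calc
    rexp (-ρ / t)
    _ = rexp (-ρ / t) * (t₀ / t) ^ k * (t / t₀) ^ k := by
        rw [mul_assoc, ← mul_pow, div_mul_div_cancel₀ ht.ne', div_self ht₀'.ne', one_pow, mul_one]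
    _ ≤ rexp (-ρ / t) * rexp (ρ / t - ρ / t₀) * (t / t₀) ^ k := by gcongr
    _ = _ := by
        rw [← exp_add]
        ring_nf

theorem exp_neg_natCast_add_le (k : ℕ) {y : ℝ} (hy : 0 ≤ y) :
    rexp (-(k + y)) ≤ (2.718 ^ k * (1 + y + y ^ 2 / 2))⁻¹ := by
  rw [exp_neg, exp_add, ← exp_one_pow]
  gcongr
  · linarith [exp_one_gt_d9]
  · exact quadratic_le_exp_of_nonneg hy

variable {t : ℝ}

theorem three_mul_exp_neg_div_le (ht : 0 < t) (ht' : t ≤ 1 / 70) :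
    3 * rexp (-0.198 / t) ≤ 1.24 * t ^ 3 := by
  have hexp : rexp (-(0.198 / (1 / 70))) ≤ 0.0000012 := by
    have h := exp_neg_natCast_add_le 13 (y := 0.86) (by norm_num)
    norm_num at h ⊢
    linarith
  calc
    3 * rexp (-0.198 / t)
    _ ≤ 3 * (0.0000012 * (t / (1 / 70)) ^ 3) := by
        gcongr
        exact (exp_neg_div_le (k := 3) ht ht' (by norm_num)).trans (by gcongr)
    _ = 1.2348 * t ^ 3 := by ring
    _ ≤ _ := by
        gcongr
        norm_num

theorem exp_neg_div_le_mul_pow_six (ht : 0 < t) (ht' : t ≤ 1 / 70) :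
    rexp (-0.38 / t) ≤ 0.354 * t ^ 6 := by
  have hexp : rexp (-(0.38 / (1 / 70))) ≤ 0.000000000003 := by
    have h := exp_neg_natCast_add_le 26 (y := 0.6) (by norm_num)
    norm_num at h ⊢
    linarith
  calc
    rexp (-0.38 / t)
    _ ≤ 0.000000000003 * (t / (1 / 70)) ^ 6 :=
        (exp_neg_div_le (k := 6) ht ht' (by norm_num)).trans (by gcongr)
    _ = 0.352947 * t ^ 6 := by ring
    _ ≤ _ := by
        gcongr
        norm_num

end ExponentialSmallness

section CumulantRatios

variable {t : ℝ}

theorem pi_sq_div_six_lt : π ^ 2 / 6 < 1.64497 := by nlinarith [pi_lt_d4, pi_pos]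

theorem logGenCumulant_one_exp_pos (ht : 0 < t) (ht' : t ≤ 1 / 70) :
    0 < logGenCumulant 1 (rexp (-t)) :=
  lt_of_lt_of_le (by positivity) (le_logGenCumulant_one_exp ht ht')

theorem logGenCumulant_one_exp_mul_le (ht : 0 < t) :
    logGenCumulant 1 (rexp (-t)) * t ^ 3 ≤ 3.29 := by
  rw [← le_div_iff₀ (by positivity)]
  refine (logGenCumulant_one_exp_le ht).trans ?_
  gcongr
  linarith [pi_sq_div_six_lt]

theorem one_div_logGenCumulant_one_exp_le (ht : 0 < t) (ht' : t ≤ 1 / 70) :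
    1 / logGenCumulant 1 (rexp (-t)) ≤ 0.318 * t ^ 3 := by
  have h := le_logGenCumulant_one_exp ht ht'
  rw [div_le_iff₀ (by positivity)] at h
  rw [div_le_iff₀ (logGenCumulant_one_exp_pos ht ht')]
  linarith

theorem logGenCumulant_nonneg (j : ℕ) {r : ℝ} (hr : 0 ≤ r) : 0 ≤ logGenCumulant j r :=
  tsum_nonneg fun k ↦ by positivity

theorem logGenCumulant_three_exp_le_mul_sq (ht : 0 < t) (ht' : t ≤ 1 / 70) :
    logGenCumulant 3 (rexp (-t)) ≤ 4.311 * t * logGenCumulant 1 (rexp (-t)) ^ 2 := by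
  have hpi := pi_sq_div_six_lt
  calc
    logGenCumulant 3 (rexp (-t))
    _ ≤ 26 * (π ^ 2 / 6) / t ^ 5 := logGenCumulant_three_exp_le ht
    _ ≤ 4.311 * 3.15 ^ 2 / t ^ 5 := by
        gcongr ?_ / _
        linarith
    _ = 4.311 * t * (3.15 / t ^ 3) ^ 2 := by field_simp
    _ ≤ _ := by
        gcongr
        exact le_logGenCumulant_one_exp ht ht'

theorem logGenCumulant_two_exp_le_mul_sq (ht : 0 < t) (ht' : t ≤ 1 / 70) :
    logGenCumulant 2 (rexp (-t)) ≤ 1.0282 * t ^ 2 * logGenCumulant 1 (rexp (-t)) ^ 2 := by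
  have hpi := pi_sq_div_six_lt
  calc
    logGenCumulant 2 (rexp (-t))
    _ ≤ 6.2 * (π ^ 2 / 6) / t ^ 4 := logGenCumulant_two_exp_le ht
    _ ≤ 1.0282 * 3.15 ^ 2 / t ^ 4 := by
        gcongr ?_ / _
        linarith
    _ = 1.0282 * t ^ 2 * (3.15 / t ^ 3) ^ 2 := by field_simp
    _ ≤ _ := by
        gcongr
        exact le_logGenCumulant_one_exp ht ht'

theorem logGenCumulant_two_exp_sq_le_mul_cube (ht : 0 < t) (ht' : t ≤ 1 / 70) :
    logGenCumulant 2 (rexp (-t)) ^ 2 ≤ 3.329 * t * logGenCumulant 1 (rexp (-t)) ^ 3 := by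
  have hκ₂ := logGenCumulant_nonneg 2 (exp_pos (-t)).le
  calc
    logGenCumulant 2 (rexp (-t)) ^ 2
    _ ≤ (6.2 * (π ^ 2 / 6) / t ^ 4) ^ 2 := by
        gcongr
        exact logGenCumulant_two_exp_le ht
    _ ≤ (6.2 * 1.64497 / t ^ 4) ^ 2 := by
        gcongr
        exact pi_sq_div_six_lt.le
    _ = (6.2 * 1.64497) ^ 2 / t ^ 8 := by rw [div_pow, ← pow_mul]
    _ ≤ 3.329 * 3.15 ^ 3 / t ^ 8 := by
        gcongr ?_ / _
        norm_num
    _ = 3.329 * t * (3.15 / t ^ 3) ^ 3 := by field_simp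
    _ ≤ _ := by
        gcongr
        exact le_logGenCumulant_one_exp ht ht'

end CumulantRatios

section Majorants

variable {t θ : ℝ}

/-- The modulus of the saddle point integrand at the radius `exp (-t)`, relative to its value at
`θ = 0`. -/
noncomputable def saddleModulus (t θ : ℝ) : ℝ := rexp (-logGenDrop (rexp (-t)) θ)

theorem saddleModulus_pos (t θ : ℝ) : 0 < saddleModulus t θ := exp_pos _

theorem continuous_saddleModulus (ht : 0 < t) : Continuous (saddleModulus t) :=
  (continuous_logGenDrop (exp_pos _).le (exp_lt_one_iff.2 (neg_lt_zero.2 ht))).neg.rexp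

/-- A Gaussian profile that dominates the saddle point integrand for `0.39 * t ≤ θ ≤ 0.8 * t`; the
factor `3 ≥ e` makes up for the decay of the last exponential there. -/
noncomputable def midGaussian (t θ : ℝ) : ℝ :=
  3 * rexp (-0.198 / t) * rexp (-(1 / (0.8 * t) ^ 2) * θ ^ 2)

theorem midGaussian_nonneg (t θ : ℝ) : 0 ≤ midGaussian t θ := by
  unfold midGaussian
  positivity

theorem continuous_midGaussian (t : ℝ) : Continuous (midGaussian t) := by
  unfold midGaussian
  fun_prop

theorem exp_neg_div_le_midGaussian (ht : 0 < t) (hθ : 0 ≤ θ) (hθ' : θ ≤ 0.8 * t) :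
    rexp (-0.198 / t) ≤ midGaussian t θ := by
  have hle : -1 ≤ -(1 / (0.8 * t) ^ 2) * θ ^ 2 := by
    rw [neg_mul, neg_le_neg_iff, one_div_mul_eq_div, div_le_one (by positivity)]
    gcongr
  have hexp : 1 ≤ 3 * rexp (-(1 / (0.8 * t) ^ 2) * θ ^ 2) := calc
    1
    _ = rexp 1 * rexp (-1) := by rw [← exp_add, add_neg_cancel, exp_zero]
    _ ≤ _ := by
        gcongr
        linarith [exp_one_lt_d9]
  rw [midGaussian, mul_comm (3 : ℝ), mul_assoc]
  exact le_mul_of_one_le_right (exp_pos _).le hexp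

theorem logGenCumulant_three_exp_div_le (ht : 0 < t) :
    logGenCumulant 3 (rexp (-t)) / 24 * θ ^ 4 ≤ 1.78206 * (θ / t) ^ 4 / t := calc
  logGenCumulant 3 (rexp (-t)) / 24 * θ ^ 4
  _ ≤ 26 * (π ^ 2 / 6) / t ^ 5 / 24 * θ ^ 4 := by
      gcongr
      exact logGenCumulant_three_exp_le ht
  _ = 26 / 24 * (π ^ 2 / 6) * (θ / t) ^ 4 / t := by field_simp
  _ ≤ _ := by
      gcongr ?_ * _ / _
      linarith [pi_sq_div_six_lt]

theorem le_logGenDrop_exp_near (ht : 0 < t) (ht' : t ≤ 1 / 70) (hθ : 0 ≤ θ)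
    (hθ' : θ ≤ 0.39 * t) :
    0.4096 * logGenCumulant 1 (rexp (-t)) * θ ^ 2 ≤ logGenDrop (rexp (-t)) θ := by
  have hdrop := le_logGenDrop (exp_pos (-t)).le (exp_lt_one_iff.2 (neg_lt_zero.2 ht)) θ
  have hx : θ / t ≤ 0.39 := (div_le_iff₀ ht).2 hθ'
  have hquartic : 1.78206 * (θ / t) ^ 4 / t ≤
      0.0904 * (logGenCumulant 1 (rexp (-t)) * θ ^ 2) := calc
    1.78206 * (θ / t) ^ 4 / t
    _ = 1.78206 * (θ / t) ^ 2 * θ ^ 2 / t ^ 3 := by field_simp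
    _ ≤ 1.78206 * 0.39 ^ 2 * θ ^ 2 / t ^ 3 := by gcongr
    _ ≤ 0.0904 * 3.15 * θ ^ 2 / t ^ 3 := by
        gcongr ?_ * _ / _
        norm_num
    _ = 0.0904 * (3.15 / t ^ 3 * θ ^ 2) := by ring
    _ ≤ _ := by
        gcongr
        exact le_logGenCumulant_one_exp ht ht'
  linarith [logGenCumulant_three_exp_div_le (θ := θ) ht]

theorem le_logGenDrop_exp_mid (ht : 0 < t) (ht' : t ≤ 1 / 70) (hθ : 0.39 * t ≤ θ)
    (hθ' : θ ≤ 0.8 * t) : 0.198 / t ≤ logGenDrop (rexp (-t)) θ := by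
  have hdrop := le_logGenDrop (exp_pos (-t)).le (exp_lt_one_iff.2 (neg_lt_zero.2 ht)) θ
  have hx : 0.39 ≤ θ / t := (le_div_iff₀ ht).2 hθ
  have hx' : θ / t ≤ 0.8 := (div_le_iff₀ ht).2 hθ'
  have hκ₁ : 3.15 / t ^ 3 * (θ ^ 2 / 2) ≤ logGenCumulant 1 (rexp (-t)) * (θ ^ 2 / 2) := by
    gcongr
    exact le_logGenCumulant_one_exp ht ht'
  calc
    0.198 / t
    _ ≤ (1.575 * (θ / t) ^ 2 - 1.78206 * (θ / t) ^ 4) / t := by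
        gcongr ?_ / _
        have hlow : 0.1521 ≤ (θ / t) ^ 2 := by nlinarith only [hx]
        have hhigh : (θ / t) ^ 2 ≤ 0.64 := by nlinarith only [hx, hx']
        nlinarith only [mul_nonneg (sub_nonneg.2 hlow) (sub_nonneg.2 hhigh), hlow, hhigh]
    _ = 3.15 / t ^ 3 * (θ ^ 2 / 2) - 1.78206 * (θ / t) ^ 4 / t := by
        field_simp
        ring
    _ ≤ _ := by linarith [logGenCumulant_three_exp_div_le (θ := θ) ht]

theorem logGenDrop_exp_cases (ht : 0 < t) (ht' : t ≤ 1 / 70) (hθ : 0 ≤ θ) (hθ' : θ ≤ π) :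
    0.4096 * logGenCumulant 1 (rexp (-t)) * θ ^ 2 ≤ logGenDrop (rexp (-t)) θ ∨
      (θ ≤ 0.8 * t ∧ 0.198 / t ≤ logGenDrop (rexp (-t)) θ) ∨
        0.38 / t ≤ logGenDrop (rexp (-t)) θ := by
  rcases le_total (0.8 * t) θ with hfar | hmid
  · exact .inr (.inr (le_logGenDrop_exp_of_le_pi ht ht' hfar hθ'))
  rcases le_total (0.39 * t) θ with hmid' | hnear
  · exact .inr (.inl ⟨hmid, le_logGenDrop_exp_mid ht ht' hmid' hmid⟩)
  · exact .inl (le_logGenDrop_exp_near ht ht' hθ hnear)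

theorem saddleModulus_le (ht : 0 < t) (ht' : t ≤ 1 / 70) (hθ : 0 ≤ θ) (hθ' : θ ≤ π) :
    saddleModulus t θ ≤ rexp (-(0.4096 * logGenCumulant 1 (rexp (-t))) * θ ^ 2) ∨
      (θ ≤ 0.8 * t ∧ saddleModulus t θ ≤ midGaussian t θ) ∨
        saddleModulus t θ ≤ rexp (-0.38 / t) := by
  refine (logGenDrop_exp_cases ht ht' hθ hθ').imp (fun hnear ↦ ?_) (.imp (fun hmid ↦ ?_) ?_)
  · exact exp_le_exp.2 (by linarith)
  · refine ⟨hmid.1, le_trans (exp_le_exp.2 ?_) (exp_neg_div_le_midGaussian ht hθ hmid.1)⟩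
    rw [neg_div]
    linarith
  · intro hfar
    refine exp_le_exp.2 ?_
    rw [neg_div]
    linarith

theorem exp_neg_mul_sq_le_saddleModulus (ht : 0 < t) (θ : ℝ) :
    rexp (-(logGenCumulant 1 (rexp (-t)) / 2) * θ ^ 2) ≤ saddleModulus t θ := by
  refine exp_le_exp.2 ?_
  linarith [logGenDrop_le (exp_pos (-t)).le (exp_lt_one_iff.2 (neg_lt_zero.2 ht)) θ]

theorem saddleModulus_mul_le (ht : 0 < t) (ht' : t ≤ 1 / 70) (hθ : 0 ≤ θ) (hθ' : θ ≤ π)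
    {y a b c : ℝ} (hy : 0 ≤ y) (ha : y ≤ a) (hb : θ ≤ 0.8 * t → y ≤ b) (hb₀ : 0 ≤ b)
    (hc : y ≤ c) : saddleModulus t θ * y ≤
      a * rexp (-(0.4096 * logGenCumulant 1 (rexp (-t))) * θ ^ 2) +
        b * midGaussian t θ + c * rexp (-0.38 / t) := by
  have hnear₀ := mul_nonneg (hy.trans ha)
    (exp_pos (-(0.4096 * logGenCumulant 1 (rexp (-t))) * θ ^ 2)).le
  have hmid₀ := mul_nonneg hb₀ (midGaussian_nonneg t θ)
  have hfar₀ := mul_nonneg (hy.trans hc) (exp_pos (-0.38 / t)).le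
  obtain hnear | ⟨hθt, hmid⟩ | hfar := saddleModulus_le ht ht' hθ hθ'
  · linarith [mul_le_mul hnear ha hy (exp_pos _).le]
  · linarith [mul_le_mul hmid (hb hθt) hy (midGaussian_nonneg t θ)]
  · linarith [mul_le_mul hfar hc hy (exp_pos _).le]

theorem saddleModulus_sub_le (ht : 0 < t) (θ : ℝ) :
    saddleModulus t θ - rexp (-(logGenCumulant 1 (rexp (-t)) / 2) * θ ^ 2) ≤
      logGenCumulant 3 (rexp (-t)) / 24 * θ ^ 4 * saddleModulus t θ := by
  have hdrop := le_logGenDrop (exp_pos (-t)).le (exp_lt_one_iff.2 (neg_lt_zero.2 ht)) θ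
  have hfactor : rexp (-(logGenCumulant 1 (rexp (-t)) / 2) * θ ^ 2) = saddleModulus t θ *
      rexp (logGenDrop (rexp (-t)) θ - logGenCumulant 1 (rexp (-t)) / 2 * θ ^ 2) := by
    rw [saddleModulus, ← exp_add]
    ring_nf
  have hexp : 1 - logGenCumulant 3 (rexp (-t)) / 24 * θ ^ 4 ≤
      rexp (logGenDrop (rexp (-t)) θ - logGenCumulant 1 (rexp (-t)) / 2 * θ ^ 2) := by
    linarith [add_one_le_exp
      (logGenDrop (rexp (-t)) θ - logGenCumulant 1 (rexp (-t)) / 2 * θ ^ 2)]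
  rw [hfactor]
  linarith [mul_le_mul_of_nonneg_left hexp (saddleModulus_pos t θ).le]

theorem saddleModulus_le_gaussian_add (ht : 0 < t) (ht' : t ≤ 1 / 70) (hθ : 0 ≤ θ)
    (hθ' : θ ≤ π) :
    saddleModulus t θ ≤ rexp (-(logGenCumulant 1 (rexp (-t)) / 2) * θ ^ 2) +
      logGenCumulant 3 (rexp (-t)) / 24 *
        (θ ^ 4 * rexp (-(0.4096 * logGenCumulant 1 (rexp (-t))) * θ ^ 2)) +
      midGaussian t θ + rexp (-0.38 / t) := by
  have hκ₃ := logGenCumulant_nonneg 3 (exp_pos (-t)).le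
  have hmain := exp_pos (-(logGenCumulant 1 (rexp (-t)) / 2) * θ ^ 2)
  have hquartic : 0 ≤ logGenCumulant 3 (rexp (-t)) / 24 *
      (θ ^ 4 * rexp (-(0.4096 * logGenCumulant 1 (rexp (-t))) * θ ^ 2)) := by positivity
  have hmid₀ := midGaussian_nonneg t θ
  have hfar₀ := exp_pos (-0.38 / t)
  obtain hnear | ⟨-, hmid⟩ | hfar := saddleModulus_le ht ht' hθ hθ'
  · have hcoeff : 0 ≤ logGenCumulant 3 (rexp (-t)) / 24 * θ ^ 4 := by positivity
    linarith [saddleModulus_sub_le ht θ, mul_le_mul_of_nonneg_left hnear hcoeff]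
  · linarith
  · linarith

end Majorants

section MajorantIntegrals

open Nat (doubleFactorial)

variable {t : ℝ}

/-- The width of the saddle: the integral over `ℝ` of the Gaussian approximation to
`saddleModulus t`. -/
noncomputable def saddleWidth (t : ℝ) : ℝ := √(π / (logGenCumulant 1 (rexp (-t)) / 2))

theorem saddleWidth_pos (ht : 0 < t) (ht' : t ≤ 1 / 70) : 0 < saddleWidth t := by
  have := logGenCumulant_one_exp_pos ht ht'
  unfold saddleWidth
  positivity

theorem saddleWidth_sq (ht : 0 < t) (ht' : t ≤ 1 / 70) :
    saddleWidth t ^ 2 = 2 * π * (1 / logGenCumulant 1 (rexp (-t))) := by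
  have := logGenCumulant_one_exp_pos ht ht'
  rw [saddleWidth, sq_sqrt (by positivity)]
  field_simp

theorem sqrt_pi_div_near_le (ht : 0 < t) (ht' : t ≤ 1 / 70) :
    √(π / (0.4096 * logGenCumulant 1 (rexp (-t)))) ≤ 1.105 * saddleWidth t := by
  have := logGenCumulant_one_exp_pos ht ht'
  have := saddleWidth_pos ht ht'
  rw [sqrt_le_left (by positivity), mul_pow, saddleWidth_sq ht ht', div_le_iff₀ (by positivity)]
  field_simp
  norm_num

theorem sqrt_pi_div_mid_le (ht : 0 < t) (ht' : t ≤ 1 / 70) :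
    √(π / (1 / (0.8 * t) ^ 2)) ≤ 0.124 * saddleWidth t / t := by
  have hκ := logGenCumulant_one_exp_pos ht ht'
  have := saddleWidth_pos ht ht'
  have hκt : logGenCumulant 1 (rexp (-t)) * t ^ 3 * t ≤ 3.29 * (1 / 70) := by
    gcongr
    exact logGenCumulant_one_exp_mul_le ht
  rw [sqrt_le_left (by positivity), div_pow, mul_pow (0.124 : ℝ), saddleWidth_sq ht ht',
    le_div_iff₀ (by positivity)]
  calc
    π / (1 / (0.8 * t) ^ 2) * t ^ 2
    _ = 0.32 * (logGenCumulant 1 (rexp (-t)) * t ^ 3 * t) *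
          (2 * π * (1 / logGenCumulant 1 (rexp (-t)))) := by
        field_simp
        norm_num
    _ ≤ _ := by
        gcongr
        linarith

theorem pi_le_saddleWidth_div (ht : 0 < t) (ht' : t ≤ 1 / 70) :
    π ≤ 0.273 * saddleWidth t / t ^ 2 := by
  have hκ := logGenCumulant_one_exp_pos ht ht'
  have := saddleWidth_pos ht ht'
  have hκt : logGenCumulant 1 (rexp (-t)) * t ^ 3 * t ≤ 3.29 * (1 / 70) := by
    gcongr
    exact logGenCumulant_one_exp_mul_le ht
  have hπκt : π * (logGenCumulant 1 (rexp (-t)) * t ^ 3 * t) ≤ 0.149 := by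
    nlinarith only [mul_le_mul pi_lt_d4.le hκt (by positivity) (by norm_num)]
  refine le_of_sq_le_sq ?_ (by positivity)
  rw [div_pow, mul_pow, saddleWidth_sq ht ht', le_div_iff₀ (by positivity)]
  calc
    π ^ 2 * (t ^ 2) ^ 2
    _ = π * (logGenCumulant 1 (rexp (-t)) * t ^ 3 * t) / 2 *
          (2 * π * (1 / logGenCumulant 1 (rexp (-t)))) := by field_simp
    _ ≤ _ := by
        gcongr
        linarith

theorem mul_integral_pow_mul_near_le (ht : 0 < t) (ht' : t ≤ 1 / 70) {k : ℕ} {K C : ℝ}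
    (hC : 0 ≤ C) (hK : K ≤ C * logGenCumulant 1 (rexp (-t)) ^ k) :
    K * ∫ θ in (0 : ℝ)..π, θ ^ (2 * k) *
        rexp (-(0.4096 * logGenCumulant 1 (rexp (-t))) * θ ^ 2) ≤
      C * (doubleFactorial (2 * k - 1) / 2 ^ (k + 1) / 0.4096 ^ k * 1.105) * saddleWidth t := by
  have hκ := logGenCumulant_one_exp_pos ht ht'
  have hmoment := integral_pow_mul_exp_neg_mul_sq_le
    (b := 0.4096 * logGenCumulant 1 (rexp (-t))) (by positivity) k pi_pos.le
  have hmoment₀ : 0 ≤ ∫ θ in (0 : ℝ)..π, θ ^ (2 * k) *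
      rexp (-(0.4096 * logGenCumulant 1 (rexp (-t))) * θ ^ 2) :=
    intervalIntegral.integral_nonneg pi_pos.le fun θ _ ↦
      mul_nonneg ((even_two_mul k).pow_nonneg θ) (exp_pos _).le
  calc
    _ ≤ C * logGenCumulant 1 (rexp (-t)) ^ k * (doubleFactorial (2 * k - 1) / 2 ^ (k + 1) *
          (1.105 * saddleWidth t) / (0.4096 * logGenCumulant 1 (rexp (-t))) ^ k) := by
        refine mul_le_mul hK (hmoment.trans ?_) hmoment₀ (by positivity)
        gcongr
        exact sqrt_pi_div_near_le ht ht'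
    _ = _ := by
        rw [mul_pow]
        field_simp

theorem integral_pow_mul_midGaussian_le (ht : 0 < t) (ht' : t ≤ 1 / 70) (k : ℕ) :
    ∫ θ in (0 : ℝ)..π, θ ^ (2 * k) * midGaussian t θ ≤
      1.24 * 0.124 * (doubleFactorial (2 * k - 1) / 2 ^ (k + 1) * 0.64 ^ k) *
        (saddleWidth t * t ^ (2 * k + 2)) := by
  have hw := saddleWidth_pos ht ht'
  have hmoment := integral_pow_mul_exp_neg_mul_sq_le
    (b := 1 / (0.8 * t) ^ 2) (by positivity) k pi_pos.le
  have hmoment₀ : 0 ≤ ∫ θ in (0 : ℝ)..π, θ ^ (2 * k) * rexp (-(1 / (0.8 * t) ^ 2) * θ ^ 2) :=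
    intervalIntegral.integral_nonneg pi_pos.le fun θ _ ↦
      mul_nonneg ((even_two_mul k).pow_nonneg θ) (exp_pos _).le
  have hfactor : ∀ θ : ℝ, θ ^ (2 * k) * midGaussian t θ =
      3 * rexp (-0.198 / t) * (θ ^ (2 * k) * rexp (-(1 / (0.8 * t) ^ 2) * θ ^ 2)) := fun θ ↦ by
    rw [midGaussian]
    ring
  simp only [hfactor, intervalIntegral.integral_const_mul]
  calc
    _ ≤ 1.24 * t ^ 3 * (doubleFactorial (2 * k - 1) / 2 ^ (k + 1) * (0.124 * saddleWidth t / t) /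
          (1 / (0.8 * t) ^ 2) ^ k) := by
        refine mul_le_mul (three_mul_exp_neg_div_le ht ht') (hmoment.trans ?_) hmoment₀
          (by positivity)
        gcongr
        exact sqrt_pi_div_mid_le ht ht'
    _ = _ := by
        rw [one_div, inv_pow, div_inv_eq_mul, ← pow_mul, mul_pow, pow_mul (0.8 : ℝ),
          show (0.8 : ℝ) ^ 2 = 0.64 by norm_num]
        field_simp
        ring

theorem integral_midGaussian_le (ht : 0 < t) (ht' : t ≤ 1 / 70) :
    ∫ θ in (0 : ℝ)..π, midGaussian t θ ≤ 0.0769 * (saddleWidth t * t ^ 2) := by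
  have hw := saddleWidth_pos ht ht'
  have h := integral_pow_mul_midGaussian_le ht ht' 0
  simp only [mul_zero, pow_zero, one_mul] at h
  refine h.trans ?_
  gcongr
  norm_num [doubleFactorial]

theorem integral_sq_mul_midGaussian_le (ht : 0 < t) (ht' : t ≤ 1 / 70) :
    ∫ θ in (0 : ℝ)..π, θ ^ 2 * midGaussian t θ ≤ 0.02461 * (saddleWidth t * t ^ 4) := by
  have hw := saddleWidth_pos ht ht'
  refine (integral_pow_mul_midGaussian_le ht ht' 1).trans ?_
  gcongr
  norm_num [doubleFactorial]

theorem exp_neg_div_mul_pi_le (ht : 0 < t) (ht' : t ≤ 1 / 70) :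
    rexp (-0.38 / t) * π ≤ 0.09665 * (saddleWidth t * t ^ 4) := by
  have hw := saddleWidth_pos ht ht'
  calc
    rexp (-0.38 / t) * π
    _ ≤ 0.354 * t ^ 6 * (0.273 * saddleWidth t / t ^ 2) :=
        mul_le_mul (exp_neg_div_le_mul_pow_six ht ht') (pi_le_saddleWidth_div ht ht') pi_pos.le
          (by positivity)
    _ = 0.096642 * (saddleWidth t * t ^ 4) := by
        field_simp
        norm_num
    _ ≤ _ := by
        gcongr
        norm_num

end MajorantIntegrals

section SaddleIntegral

variable {t : ℝ} {n : ℕ}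

/-- The phase of the saddle point integrand for `p n` at the point `exp (-t + θ * I)`. -/
noncomputable def saddlePhase (n : ℕ) (t θ : ℝ) : ℝ := logGenArg (rexp (-t)) θ - n * θ

theorem continuous_saddlePhase (ht : 0 < t) (n : ℕ) : Continuous (saddlePhase n t) :=
  (continuous_logGenArg (exp_pos _).le (exp_lt_one_iff.2 (neg_lt_zero.2 ht))).sub (by fun_prop)

/-- The saddle point integral, which is `p n` up to explicit factors for every `t`. -/
noncomputable def saddleIntegral (n : ℕ) (t : ℝ) : ℝ :=
  ∫ θ in (0 : ℝ)..π, saddleModulus t θ * cos (saddlePhase n t θ)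

/-- The part of the variation of `saddleIntegral` that is common to the steps `n ± 1`. -/
noncomputable def saddleEvenVariation (n : ℕ) (t : ℝ) : ℝ :=
  ∫ θ in (0 : ℝ)..π, saddleModulus t θ * cos (saddlePhase n t θ) * (1 - cos θ)

/-- The part of the variation of `saddleIntegral` that changes sign between the steps `n ± 1`. -/
noncomputable def saddleOddVariation (n : ℕ) (t : ℝ) : ℝ :=
  ∫ θ in (0 : ℝ)..π, saddleModulus t θ * (sin (saddlePhase n t θ) * sin θ)

theorem saddleIntegral_succ (ht : 0 < t) (n : ℕ) : saddleIntegral (n + 1) t =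
    saddleIntegral n t - saddleEvenVariation n t + saddleOddVariation n t := by
  have hphase := continuous_saddlePhase ht n
  have hmodulus := continuous_saddleModulus ht
  rw [saddleIntegral, saddleEvenVariation, saddleOddVariation, saddleIntegral,
    ← intervalIntegral.integral_sub, ← intervalIntegral.integral_add]
  · congr 1 with θ
    have hstep : saddlePhase (n + 1) t θ = saddlePhase n t θ - θ := by
      simp only [saddlePhase]
      push_cast
      ring
    rw [hstep, cos_sub]
    ring
  all_goals exact Continuous.intervalIntegrable (by fun_prop) _ _

theorem saddleIntegral_pred (ht : 0 < t) (hn : n ≠ 0) : saddleIntegral (n - 1) t =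
    saddleIntegral n t - saddleEvenVariation n t - saddleOddVariation n t := by
  have hphase := continuous_saddlePhase ht n
  have hmodulus := continuous_saddleModulus ht
  rw [saddleIntegral, saddleEvenVariation, saddleOddVariation, saddleIntegral,
    ← intervalIntegral.integral_sub, ← intervalIntegral.integral_sub]
  · congr 1 with θ
    have hstep : saddlePhase (n - 1) t θ = saddlePhase n t θ + θ := by
      rw [saddlePhase, saddlePhase, Nat.cast_pred (Nat.pos_of_ne_zero hn)]
      ring
    rw [hstep, cos_add]
    ring
  all_goals exact Continuous.intervalIntegrable (by fun_prop) _ _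

end SaddleIntegral

section SaddleEstimates

variable {t : ℝ} {n : ℕ}

theorem integral_sub_of_continuous {f g : ℝ → ℝ} (hf : Continuous f) (hg : Continuous g)
    (a b : ℝ) : ∫ θ in a..b, (f θ - g θ) = (∫ θ in a..b, f θ) - ∫ θ in a..b, g θ :=
  intervalIntegral.integral_sub (hf.intervalIntegrable _ _) (hg.intervalIntegrable _ _)

theorem saddleIntegral_sub_le (ht : 0 < t) (ht' : t ≤ 1 / 70) (n : ℕ) :
    saddleIntegral n t -
        ∫ θ in (0 : ℝ)..π, rexp (-(logGenCumulant 1 (rexp (-t)) / 2) * θ ^ 2) ≤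
      logGenCumulant 3 (rexp (-t)) / 24 * (∫ θ in (0 : ℝ)..π,
          θ ^ (2 * 2) * rexp (-(0.4096 * logGenCumulant 1 (rexp (-t))) * θ ^ 2)) +
        1 * (∫ θ in (0 : ℝ)..π, midGaussian t θ) +
        rexp (-0.38 / t) * ∫ _ in (0 : ℝ)..π, 1 := by
  have hphase := continuous_saddlePhase ht n
  have hmodulus := continuous_saddleModulus ht
  have hmid := continuous_midGaussian t
  rw [saddleIntegral, ← integral_sub_of_continuous (by fun_prop) (by fun_prop)]
  refine integral_le_of_forall_le (by fun_prop) (by fun_prop) hmid (by fun_prop) pi_pos.le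
    fun θ hθ hθ' ↦ ?_
  linarith [saddleModulus_le_gaussian_add ht ht' hθ hθ',
    mul_le_of_le_one_right (saddleModulus_pos t θ).le (cos_le_one (saddlePhase n t θ))]

theorem saddleIntegral_le (ht : 0 < t) (ht' : t ≤ 1 / 70) (n : ℕ) :
    saddleIntegral n t ≤ saddleWidth t * (1 / 2 + 0.45 * t) := by
  have hκ := logGenCumulant_one_exp_pos ht ht'
  have hw := saddleWidth_pos ht ht'
  have hgaussian := integral_pow_mul_exp_neg_mul_sq_le
    (b := logGenCumulant 1 (rexp (-t)) / 2) (by positivity) 0 pi_pos.le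
  have hquartic := mul_integral_pow_mul_near_le (k := 2) (C := 4.311 * t / 24)
    (K := logGenCumulant 3 (rexp (-t)) / 24) ht ht' (by positivity)
    (by linarith [logGenCumulant_three_exp_le_mul_sq ht ht'])
  have hmid := integral_midGaussian_le ht ht'
  have hfar := exp_neg_div_mul_pi_le ht ht'
  have h := saddleIntegral_sub_le ht ht' n
  rw [← saddleWidth] at hgaussian
  norm_num [Nat.doubleFactorial] at hgaussian hquartic h
  have ht₂ : saddleWidth t * t ^ 2 ≤ saddleWidth t * t * (1 / 70) := by
    rw [pow_two, ← mul_assoc]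
    gcongr
  have ht₄ : saddleWidth t * t ^ 4 ≤ saddleWidth t * t * (1 / 70) ^ 3 := by
    rw [pow_succ' t 3, ← mul_assoc]
    gcongr
  norm_num at ht₂ ht₄ hfar hmid ⊢
  linarith only [h, hgaussian, hquartic, hmid, hfar, ht₂, ht₄, mul_pos hw ht]

theorem abs_saddlePhase_le (ht : 0 < t) (hn : logGenCumulant 0 (rexp (-t)) = n) {θ : ℝ}
    (hθ : 0 ≤ θ) : |saddlePhase n t θ| ≤ logGenCumulant 2 (rexp (-t)) * (θ ^ 3 / 6) := by
  rw [saddlePhase, ← hn]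
  exact abs_logGenArg_sub_le (exp_pos (-t)).le (exp_lt_one_iff.2 (neg_lt_zero.2 ht)) hθ

theorem one_sub_cos_saddlePhase_le (ht : 0 < t) (hn : logGenCumulant 0 (rexp (-t)) = n) {θ : ℝ}
    (hθ : 0 ≤ θ) :
    1 - cos (saddlePhase n t θ) ≤ logGenCumulant 2 (rexp (-t)) ^ 2 / 72 * θ ^ 6 := by
  have hsq := pow_le_pow_left₀ (abs_nonneg _) (abs_saddlePhase_le ht hn hθ) 2
  rw [sq_abs] at hsq
  linarith [one_sub_sq_div_two_le_cos (x := saddlePhase n t θ)]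

theorem integral_gaussian_sub_saddleIntegral_le (ht : 0 < t) (ht' : t ≤ 1 / 70)
    (hn : logGenCumulant 0 (rexp (-t)) = n) :
    (∫ θ in (0 : ℝ)..π, rexp (-(logGenCumulant 1 (rexp (-t)) / 2) * θ ^ 2)) -
        saddleIntegral n t ≤
      logGenCumulant 2 (rexp (-t)) ^ 2 / 72 * (∫ θ in (0 : ℝ)..π,
          θ ^ (2 * 3) * rexp (-(0.4096 * logGenCumulant 1 (rexp (-t))) * θ ^ 2)) +
        2 * (∫ θ in (0 : ℝ)..π, midGaussian t θ) +
        2 * rexp (-0.38 / t) * ∫ _ in (0 : ℝ)..π, 1 := by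
  have hphase := continuous_saddlePhase ht n
  have hmodulus := continuous_saddleModulus ht
  have hmid := continuous_midGaussian t
  rw [saddleIntegral, ← integral_sub_of_continuous (by fun_prop) (by fun_prop)]
  refine integral_le_of_forall_le (by fun_prop) (by fun_prop) hmid (by fun_prop) pi_pos.le
    fun θ hθ hθ' ↦ ?_
  have hle_two : 1 - cos (saddlePhase n t θ) ≤ 2 := by
    linarith [neg_one_le_cos (saddlePhase n t θ)]
  linarith [exp_neg_mul_sq_le_saddleModulus ht θ,
    saddleModulus_mul_le ht ht' hθ hθ' (sub_nonneg.2 (cos_le_one (saddlePhase n t θ)))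
      (one_sub_cos_saddlePhase_le ht hn hθ) (fun _ ↦ hle_two) zero_le_two hle_two]

theorem le_saddleIntegral (ht : 0 < t) (ht' : t ≤ 1 / 70)
    (hn : logGenCumulant 0 (rexp (-t)) = n) :
    saddleWidth t * (1 / 2 - 0.71 * t) ≤ saddleIntegral n t := by
  have hκ := logGenCumulant_one_exp_pos ht ht'
  have hw := saddleWidth_pos ht ht'
  have hgaussian := le_integral_exp_neg_mul_sq (b := logGenCumulant 1 (rexp (-t)) / 2)
    (by positivity)
  rw [← saddleWidth, show 1 / (36 * (logGenCumulant 1 (rexp (-t)) / 2)) =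
    1 / logGenCumulant 1 (rexp (-t)) / 18 by field_simp; norm_num] at hgaussian
  have hκ' := mul_le_mul_of_nonneg_left (one_div_logGenCumulant_one_exp_le ht ht') hw.le
  have hsextic := mul_integral_pow_mul_near_le (k := 3) (C := 3.329 * t / 72)
    (K := logGenCumulant 2 (rexp (-t)) ^ 2 / 72) ht ht' (by positivity)
    (by linarith [logGenCumulant_two_exp_sq_le_mul_cube ht ht'])
  have hmid := integral_midGaussian_le ht ht'
  have hfar := exp_neg_div_mul_pi_le ht ht'
  have h := integral_gaussian_sub_saddleIntegral_le ht ht' hn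
  norm_num [Nat.doubleFactorial] at hsextic h
  have ht₂ : saddleWidth t * t ^ 2 ≤ saddleWidth t * t * (1 / 70) := by
    rw [pow_two, ← mul_assoc]
    gcongr
  have ht₃ : saddleWidth t * t ^ 3 ≤ saddleWidth t * t * (1 / 70) ^ 2 := by
    rw [pow_succ' t 2, ← mul_assoc]
    gcongr
  have ht₄ : saddleWidth t * t ^ 4 ≤ saddleWidth t * t * (1 / 70) ^ 3 := by
    rw [pow_succ' t 3, ← mul_assoc]
    gcongr
  norm_num at ht₂ ht₃ ht₄ hfar hmid hgaussian hκ' ⊢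
  linarith only [h, hgaussian, hκ', hsextic, hmid, hfar, ht₂, ht₃, ht₄, mul_pos hw ht]

theorem integral_gaussian_sub_saddleEvenVariation_le (ht : 0 < t) (ht' : t ≤ 1 / 70)
    (hn : logGenCumulant 0 (rexp (-t)) = n) :
    (∫ θ in (0 : ℝ)..π, (1 - cos θ) * rexp (-(logGenCumulant 1 (rexp (-t)) / 2) * θ ^ 2)) -
        saddleEvenVariation n t ≤
      logGenCumulant 2 (rexp (-t)) ^ 2 / 144 * (∫ θ in (0 : ℝ)..π,
          θ ^ (2 * 4) * rexp (-(0.4096 * logGenCumulant 1 (rexp (-t))) * θ ^ 2)) +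
        1 * (∫ θ in (0 : ℝ)..π, θ ^ 2 * midGaussian t θ) +
        2 * rexp (-0.38 / t) * ∫ θ in (0 : ℝ)..π, (1 - cos θ) := by
  have hphase := continuous_saddlePhase ht n
  have hmodulus := continuous_saddleModulus ht
  have hmid := continuous_midGaussian t
  rw [saddleEvenVariation, ← integral_sub_of_continuous (by fun_prop) (by fun_prop)]
  refine integral_le_of_forall_le (by fun_prop) (by fun_prop) (by fun_prop) (by fun_prop)
    pi_pos.le fun θ hθ hθ' ↦ ?_
  have hcos := sub_nonneg.2 (cos_le_one θ)
  have hcos_sq : 1 - cos θ ≤ θ ^ 2 / 2 := by linarith [one_sub_sq_div_two_le_cos (x := θ)]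
  have hphase₀ := sub_nonneg.2 (cos_le_one (saddlePhase n t θ))
  have hle_two : (1 - cos θ) * (1 - cos (saddlePhase n t θ)) ≤ (1 - cos θ) * 2 := by
    gcongr
    linarith [neg_one_le_cos (saddlePhase n t θ)]
  have hmodulus_le := saddleModulus_mul_le ht ht' hθ hθ' (mul_nonneg hcos hphase₀)
    (mul_le_mul hcos_sq (one_sub_cos_saddlePhase_le ht hn hθ) hphase₀ (by positivity))
    (fun _ ↦ hle_two.trans (by linarith)) (sq_nonneg θ) hle_two
  linarith [mul_le_mul_of_nonneg_left (exp_neg_mul_sq_le_saddleModulus ht θ) hcos]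

theorem saddleWidth_mul_pow_three_le (ht : 0 < t) (ht' : t ≤ 1 / 70) :
    saddleWidth t * t ^ 3 ≤ 3.29 * (saddleWidth t / logGenCumulant 1 (rexp (-t))) := by
  have hκ := logGenCumulant_one_exp_pos ht ht'
  rw [mul_div_assoc', le_div_iff₀ hκ]
  linarith [mul_le_mul_of_nonneg_left (logGenCumulant_one_exp_mul_le ht)
    (saddleWidth_pos ht ht').le]

theorem le_saddleEvenVariation (ht : 0 < t) (ht' : t ≤ 1 / 70)
    (hn : logGenCumulant 0 (rexp (-t)) = n) :
    saddleWidth t / logGenCumulant 1 (rexp (-t)) * (1 / 4 - 3.7 * t) ≤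
      saddleEvenVariation n t := by
  have hκ := logGenCumulant_one_exp_pos ht ht'
  have hw := saddleWidth_pos ht ht'
  have hgaussian := le_integral_one_sub_cos_mul_exp_neg_mul_sq
    (b := logGenCumulant 1 (rexp (-t)) / 2) (by positivity)
  have hoctic := mul_integral_pow_mul_near_le (k := 4)
    (C := 3.329 * t / 144 / logGenCumulant 1 (rexp (-t)))
    (K := logGenCumulant 2 (rexp (-t)) ^ 2 / 144) ht ht' (by positivity) (by
      rw [div_mul_eq_mul_div, le_div_iff₀ hκ]
      linarith [mul_le_mul_of_nonneg_right (logGenCumulant_two_exp_sq_le_mul_cube ht ht') hκ.le])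
  have hmid := integral_sq_mul_midGaussian_le ht ht'
  have hfar := exp_neg_div_mul_pi_le ht ht'
  have h := integral_gaussian_sub_saddleEvenVariation_le ht ht' hn
  have hwt := mul_le_mul_of_nonneg_right (saddleWidth_mul_pow_three_le ht ht') ht.le
  obtain ⟨v, hv⟩ : ∃ v, v = saddleWidth t / logGenCumulant 1 (rexp (-t)) := ⟨_, rfl⟩
  have hv₀ : 0 < v := by
    rw [hv]
    positivity
  rw [← saddleWidth, show saddleWidth t * (1 / (8 * (logGenCumulant 1 (rexp (-t)) / 2)) -
    1 / (48 * (logGenCumulant 1 (rexp (-t)) / 2) ^ 2)) =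
      saddleWidth t / logGenCumulant 1 (rexp (-t)) *
        (1 / 4 - 1 / logGenCumulant 1 (rexp (-t)) / 12) by field_simp; ring, ← hv] at hgaussian
  rw [mul_right_comm, div_mul_comm _ _ (saddleWidth t), ← hv] at hoctic
  rw [← hv] at hwt ⊢
  have hκ' := mul_le_mul_of_nonneg_left (one_div_logGenCumulant_one_exp_le ht ht') hv₀.le
  have ht₃ : v * t ^ 3 ≤ v * t * (1 / 70) ^ 2 := by
    rw [pow_succ' t 2, ← mul_assoc]
    gcongr
  norm_num [Nat.doubleFactorial] at hoctic h hgaussian hmid hfar hκ' hwt ht₃ ⊢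
  linarith only [h, hgaussian, hκ', hoctic, hmid, hfar, hwt, ht₃, mul_pos hv₀ ht]

theorem abs_saddleOddVariation_le_integral (ht : 0 < t) (ht' : t ≤ 1 / 70)
    (hn : logGenCumulant 0 (rexp (-t)) = n) :
    |saddleOddVariation n t| ≤
      logGenCumulant 2 (rexp (-t)) / 6 * (∫ θ in (0 : ℝ)..π,
          θ ^ (2 * 2) * rexp (-(0.4096 * logGenCumulant 1 (rexp (-t))) * θ ^ 2)) +
        0.8 * t * (∫ θ in (0 : ℝ)..π, midGaussian t θ) +
        rexp (-0.38 / t) * ∫ _ in (0 : ℝ)..π, 1 := by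
  have hphase := continuous_saddlePhase ht n
  have hmodulus := continuous_saddleModulus ht
  have hmid := continuous_midGaussian t
  have hκ₂ := logGenCumulant_nonneg 2 (exp_pos (-t)).le
  refine (intervalIntegral.abs_integral_le_integral_abs pi_pos.le).trans
    (integral_le_of_forall_le (by fun_prop) (by fun_prop) hmid (by fun_prop) pi_pos.le
      fun θ hθ hθ' ↦ ?_)
  have hsin : |sin θ| ≤ θ := by simpa [abs_of_nonneg hθ] using abs_sin_le_abs (x := θ)
  have hphase_le := abs_sin_le_one (saddlePhase n t θ)
  have hmodulus_le := saddleModulus_mul_le (b := 0.8 * t) ht ht' hθ hθ'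
    (mul_nonneg (abs_nonneg (sin (saddlePhase n t θ))) (abs_nonneg (sin θ)))
    (mul_le_mul (abs_sin_le_abs.trans (abs_saddlePhase_le ht hn hθ)) hsin (abs_nonneg _)
      (by positivity))
    (fun hθt ↦ (mul_le_of_le_one_left (abs_nonneg _) hphase_le).trans (hsin.trans hθt))
    (by positivity) (mul_le_one₀ hphase_le (abs_nonneg _) (abs_sin_le_one θ))
  rw [abs_mul, abs_mul, abs_of_pos (saddleModulus_pos t θ)]
  linarith

theorem abs_saddleOddVariation_le (ht : 0 < t) (ht' : t ≤ 1 / 70)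
    (hn : logGenCumulant 0 (rexp (-t)) = n) :
    |saddleOddVariation n t| ≤ saddleWidth t * (0.425 * t ^ 2) := by
  have hw := saddleWidth_pos ht ht'
  have hquartic := mul_integral_pow_mul_near_le (k := 2) (C := 1.0282 * t ^ 2 / 6)
    (K := logGenCumulant 2 (rexp (-t)) / 6) ht ht' (by positivity)
    (by linarith [logGenCumulant_two_exp_le_mul_sq ht ht'])
  have hmid := mul_le_mul_of_nonneg_left (integral_midGaussian_le ht ht') ht.le
  have hfar := exp_neg_div_mul_pi_le ht ht'
  have h := abs_saddleOddVariation_le_integral ht ht' hn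
  norm_num [Nat.doubleFactorial] at hquartic h
  have ht₃ : saddleWidth t * t ^ 3 ≤ saddleWidth t * t ^ 2 * (1 / 70) := by
    rw [pow_succ, ← mul_assoc]
    gcongr
  have ht₄ : saddleWidth t * t ^ 4 ≤ saddleWidth t * t ^ 2 * (1 / 70) ^ 2 := by
    rw [show t ^ 4 = t ^ 2 * t ^ 2 by ring, ← mul_assoc]
    gcongr
  norm_num at ht₃ ht₄ hfar hmid ⊢
  linarith only [h, hquartic, hmid, hfar, ht₃, ht₄, mul_pos hw (pow_pos ht 2)]

end SaddleEstimates

section LogDefect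

variable {t : ℝ} {n : ℕ}

theorem saddleIntegral_eq (ht : 0 < t) (n : ℕ) :
    saddleIntegral n t = π * p n * rexp (-t) ^ n * rexp (-logGen (rexp (-t))) :=
  integral_exp_neg_logGenDrop_mul_cos (exp_pos _) (exp_lt_one_iff.2 (neg_lt_zero.2 ht)) n

theorem saddleIntegral_pos (ht : 0 < t) (n : ℕ) : 0 < saddleIntegral n t := by
  have := p_pos n
  rw [saddleIntegral_eq ht]
  positivity

theorem log_p_eq (ht : 0 < t) (n : ℕ) :
    log (p n) = log (saddleIntegral n t) - log π + n * t + logGen (rexp (-t)) := by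
  have := p_pos n
  rw [saddleIntegral_eq ht, log_mul (by positivity) (by positivity),
    log_mul (by positivity) (by positivity), log_mul (by positivity) (by positivity), log_pow,
    log_exp, log_exp]
  ring

theorem exp_neg_mul_saddleIntegral_le (ht : 0 < t) (n : ℕ) :
    rexp (-t) * saddleIntegral n t ≤ saddleIntegral (n + 1) t := by
  rw [saddleIntegral_eq ht, saddleIntegral_eq ht]
  calc
    rexp (-t) * (π * p n * rexp (-t) ^ n * rexp (-logGen (rexp (-t))))
    _ = π * p n * rexp (-t) ^ (n + 1) * rexp (-logGen (rexp (-t))) := by ring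
    _ ≤ π * p (n + 1) * rexp (-t) ^ (n + 1) * rexp (-logGen (rexp (-t))) := by
        gcongr
        exact p_mono n.le_succ

theorem log_saddleIntegral_succ_add_log_saddleIntegral_pred_le (ht : 0 < t) (hn : n ≠ 0) :
    log (saddleIntegral (n + 1) t) + log (saddleIntegral (n - 1) t) -
        2 * log (saddleIntegral n t) ≤
      -2 * (saddleEvenVariation n t / saddleIntegral n t) := by
  have hA := saddleIntegral_pos ht n
  have hsucc := saddleIntegral_pos ht (n + 1)
  have hpred := saddleIntegral_pos ht (n - 1)
  have hsucc_eq := saddleIntegral_succ ht n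
  have hpred_eq := saddleIntegral_pred ht hn
  have hdiff : 0 < saddleIntegral n t - saddleEvenVariation n t := by linarith
  have hprod : log (saddleIntegral (n + 1) t) + log (saddleIntegral (n - 1) t) ≤
      2 * log (saddleIntegral n t - saddleEvenVariation n t) := by
    rw [← log_mul hsucc.ne' hpred.ne', ← Nat.cast_two, ← log_pow]
    refine log_le_log (by positivity) ?_
    rw [hsucc_eq, hpred_eq]
    linarith [sq_nonneg (saddleOddVariation n t)]
  have hlog := log_le_sub_one_of_pos (div_pos hdiff hA)
  rw [log_div hdiff.ne' hA.ne', sub_div, div_self hA.ne'] at hlog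
  linarith

theorem log_saddleIntegral_pred_sub_log_saddleIntegral_succ_le (ht : 0 < t) (hn : n ≠ 0) :
    log (saddleIntegral (n - 1) t) - log (saddleIntegral (n + 1) t) ≤
      2 * (rexp t * |saddleOddVariation n t| / saddleIntegral n t) := by
  have hA := saddleIntegral_pos ht n
  have hsucc := saddleIntegral_pos ht (n + 1)
  have hpred := saddleIntegral_pos ht (n - 1)
  have hdiff : saddleIntegral (n - 1) t - saddleIntegral (n + 1) t ≤
      2 * |saddleOddVariation n t| := by
    rw [saddleIntegral_succ ht, saddleIntegral_pred ht hn]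
    linarith [neg_abs_le (saddleOddVariation n t)]
  rw [← log_div hpred.ne' hsucc.ne', mul_div_assoc']
  refine (log_le_sub_one_of_pos (div_pos hpred hsucc)).trans ?_
  rw [div_sub_one hsucc.ne', div_le_div_iff₀ hsucc hA]
  calc
    (saddleIntegral (n - 1) t - saddleIntegral (n + 1) t) * saddleIntegral n t
    _ ≤ 2 * |saddleOddVariation n t| * saddleIntegral n t := by gcongr
    _ = 2 * (rexp t * |saddleOddVariation n t|) * (rexp (-t) * saddleIntegral n t) := by
        rw [exp_neg]
        field_simp
    _ ≤ 2 * (rexp t * |saddleOddVariation n t|) * saddleIntegral (n + 1) t := by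
        gcongr
        exact exp_neg_mul_saddleIntegral_le ht n

theorem logDefect_le_of_saddleIntegral (ht : 0 < t) (hn : n ≠ 0) :
    logDefect n ≤ 2 * logGen (rexp (-t)) + 2 * (log (saddleIntegral n t) - log π) -
      2 * n ^ 2 * (saddleEvenVariation n t / saddleIntegral n t) +
      2 * n * (rexp t * |saddleOddVariation n t| / saddleIntegral n t) := by
  have hsum := mul_le_mul_of_nonneg_left
    (log_saddleIntegral_succ_add_log_saddleIntegral_pred_le ht hn) (sq_nonneg (n : ℝ))
  have hdiff := mul_le_mul_of_nonneg_left
    (log_saddleIntegral_pred_sub_log_saddleIntegral_succ_le ht hn) (Nat.cast_nonneg (α := ℝ) n)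
  rw [logDefect, log_p_eq ht n, log_p_eq ht (n + 1), log_p_eq ht (n - 1),
    Nat.cast_pred (Nat.pos_of_ne_zero hn)]
  push_cast
  linarith

theorem le_log_seventy : 4.244 ≤ log 70 := by
  have hlog : log 70 = 6 * log 2 - log (64 / 70) := by
    rw [log_div (by norm_num) (by norm_num), show (64 : ℝ) = 2 ^ 6 by norm_num, log_pow]
    push_cast
    ring
  linarith [log_two_gt_d9, log_le_sub_one_of_pos (x := 64 / 70) (by norm_num)]

theorem saddleIntegral_div_pi_sq_mul_le (ht : 0 < t) (ht' : t ≤ 1 / 70) (n : ℕ) :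
    (saddleIntegral n t / π) ^ 2 * (t / 4) ≤ (1 / 70) ^ 5 := by
  have hA := saddleIntegral_pos ht n
  have hw := saddleWidth_pos ht ht'
  have hκ := logGenCumulant_one_exp_pos ht ht'
  calc
    (saddleIntegral n t / π) ^ 2 * (t / 4)
    _ ≤ (saddleWidth t * 0.507 / π) ^ 2 * (t / 4) := by
        gcongr
        refine (saddleIntegral_le ht ht' n).trans ?_
        gcongr
        linarith
    _ = 0.507 ^ 2 / 2 / π * (1 / logGenCumulant 1 (rexp (-t))) * t := by
        rw [div_pow, mul_pow, saddleWidth_sq ht ht']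
        field_simp
        ring
    _ ≤ 0.507 ^ 2 / 2 / 3.1415 * (0.318 * t ^ 3) * t := by
        gcongr
        · exact pi_gt_d4.le
        · exact one_div_logGenCumulant_one_exp_le ht ht'
    _ = 0.507 ^ 2 / 2 / 3.1415 * 0.318 * t ^ 4 := by ring
    _ ≤ 1 / 70 * (1 / 70) ^ 4 := by
        gcongr
        norm_num
    _ = (1 / 70) ^ 5 := by norm_num

theorem two_mul_log_saddleIntegral_le (ht : 0 < t) (ht' : t ≤ 1 / 70) (n : ℕ) :
    2 * (log (saddleIntegral n t) - log π) - log (4 / t) ≤ -21.22 := by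
  have hA := saddleIntegral_pos ht n
  have h := log_le_log (by positivity) (saddleIntegral_div_pi_sq_mul_le ht ht' n)
  rw [log_mul (by positivity) (by positivity), log_pow, log_pow, one_div, log_inv,
    log_div hA.ne' pi_ne_zero, ← inv_div, log_inv] at h
  push_cast at h
  linarith [le_log_seventy]

theorem le_saddleEvenVariation_div_saddleIntegral (ht : 0 < t) (ht' : t ≤ 1 / 70)
    (hn : logGenCumulant 0 (rexp (-t)) = n) :
    1 / logGenCumulant 1 (rexp (-t)) * (1 / 2 * (1 - 15.7 * t)) ≤
      saddleEvenVariation n t / saddleIntegral n t := by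
  have hw := saddleWidth_pos ht ht'
  have hκ := logGenCumulant_one_exp_pos ht ht'
  have ht₁ : 0 ≤ 1 - 15.7 * t := by linarith
  rw [le_div_iff₀ (saddleIntegral_pos ht n)]
  calc
    1 / logGenCumulant 1 (rexp (-t)) * (1 / 2 * (1 - 15.7 * t)) * saddleIntegral n t
    _ ≤ 1 / logGenCumulant 1 (rexp (-t)) * (1 / 2 * (1 - 15.7 * t)) *
          (saddleWidth t * (1 / 2 + 0.45 * t)) := by
        gcongr
        exact saddleIntegral_le ht ht' n
    _ = saddleWidth t / logGenCumulant 1 (rexp (-t)) *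
          (1 / 4 - 3.7 * t - 3.5325 * t ^ 2) := by ring
    _ ≤ saddleWidth t / logGenCumulant 1 (rexp (-t)) * (1 / 4 - 3.7 * t) :=
        mul_le_mul_of_nonneg_left (sub_le_self _ (by positivity)) (by positivity)
    _ ≤ saddleEvenVariation n t := le_saddleEvenVariation ht ht' hn

theorem exp_mul_abs_saddleOddVariation_div_le (ht : 0 < t) (ht' : t ≤ 1 / 70)
    (hn : logGenCumulant 0 (rexp (-t)) = n) :
    rexp t * |saddleOddVariation n t| / saddleIntegral n t ≤ 0.8809 * t ^ 2 := by
  have hw := saddleWidth_pos ht ht'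
  have hexp : rexp t ≤ 70 / 69 := by
    rw [← neg_neg t, exp_neg, ← inv_div]
    gcongr
    linarith [add_one_le_exp (-t)]
  rw [div_le_iff₀ (saddleIntegral_pos ht n)]
  calc
    rexp t * |saddleOddVariation n t|
    _ ≤ 70 / 69 * (saddleWidth t * (0.425 * t ^ 2)) := by
        gcongr
        exact abs_saddleOddVariation_le ht ht' hn
    _ ≤ 0.8809 * t ^ 2 * (saddleWidth t * 0.4898) := by
        linarith [mul_pos hw (pow_pos ht 2)]
    _ ≤ 0.8809 * t ^ 2 * saddleIntegral n t := by
        gcongr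
        refine le_trans ?_ (le_saddleIntegral ht ht' hn)
        gcongr
        linarith

theorem two_mul_exp_mul_abs_saddleOddVariation_le (ht : 0 < t) (ht' : t ≤ 1 / 70)
    (hn : logGenCumulant 0 (rexp (-t)) = n) :
    2 * n * (rexp t * |saddleOddVariation n t| / saddleIntegral n t) ≤ 3 := by
  have hA := saddleIntegral_pos ht n
  have hn_le := logGenCumulant_zero_exp_le ht
  rw [hn] at hn_le
  calc
    2 * n * (rexp t * |saddleOddVariation n t| / saddleIntegral n t)
    _ ≤ 2 * (π ^ 2 / 6 / t ^ 2) * (0.8809 * t ^ 2) := by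
        gcongr
        exact exp_mul_abs_saddleOddVariation_div_le ht ht' hn
    _ = 2 * 0.8809 * (π ^ 2 / 6) := by field_simp
    _ ≤ 3 := by linarith [pi_sq_div_six_lt]

theorem three_halves_lt_pi_sq_div_six : 1.5 < π ^ 2 / 6 := by
  nlinarith [pi_gt_three]

theorem div_two_mul_sub_le {c : ℝ} (hc : 0 < c) (hc' : c ≤ 1.64497) (ht : 0 < t)
    (ht' : t ≤ 1 / 70) :
    c / (2 * t) - 14.27 ≤ (c / t ^ 2 - 1.35 / t) ^ 2 * (t ^ 3 / (2 * c)) * (1 - 15.7 * t) := by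
  have ht₁ : 0 ≤ 1 - 15.7 * t := by linarith
  calc
    c / (2 * t) - 14.27
    _ ≤ c / (2 * t) - 1.35 - 7.85 * c + 1.35 * 15.7 * t := by linarith
    _ = (c / (2 * t) - 1.35) * (1 - 15.7 * t) := by
        field_simp
        ring
    _ ≤ (c / (2 * t) - 1.35 + 1.35 ^ 2 * t / (2 * c)) * (1 - 15.7 * t) := by
        gcongr
        exact le_add_of_nonneg_right (by positivity)
    _ = (c / t ^ 2 - 1.35 / t) ^ 2 * (t ^ 3 / (2 * c)) * (1 - 15.7 * t) := by
        field_simp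
        ring

theorem le_two_mul_sq_mul_saddleEvenVariation_div (ht : 0 < t) (ht' : t ≤ 1 / 70)
    (hn : logGenCumulant 0 (rexp (-t)) = n) :
    π ^ 2 / 6 / (2 * t) - 14.27 ≤
      2 * n ^ 2 * (saddleEvenVariation n t / saddleIntegral n t) := by
  have ht₁ : 0 ≤ 1 - 15.7 * t := by linarith
  have hle_n := le_logGenCumulant_zero_exp ht ht'
  rw [hn] at hle_n
  have hnonneg : 0 ≤ π ^ 2 / 6 / t ^ 2 - 1.35 / t := by
    rw [sub_nonneg, div_le_div_iff₀ ht (by positivity), pow_two, ← mul_assoc]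
    gcongr
    linarith [three_halves_lt_pi_sq_div_six]
  have hκ : t ^ 3 / (2 * (π ^ 2 / 6)) ≤ 1 / logGenCumulant 1 (rexp (-t)) := by
    rw [show 2 * (π ^ 2 / 6) = π ^ 2 / 3 by ring, ← one_div_div]
    exact one_div_le_one_div_of_le (logGenCumulant_one_exp_pos ht ht')
      (logGenCumulant_one_exp_le ht)
  calc
    π ^ 2 / 6 / (2 * t) - 14.27
    _ ≤ (π ^ 2 / 6 / t ^ 2 - 1.35 / t) ^ 2 * (t ^ 3 / (2 * (π ^ 2 / 6))) * (1 - 15.7 * t) :=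
        div_two_mul_sub_le (by positivity) pi_sq_div_six_lt.le ht ht'
    _ ≤ (n : ℝ) ^ 2 * (1 / logGenCumulant 1 (rexp (-t))) * (1 - 15.7 * t) := by gcongr
    _ = 2 * n ^ 2 * (1 / logGenCumulant 1 (rexp (-t)) * (1 / 2 * (1 - 15.7 * t))) := by ring
    _ ≤ 2 * n ^ 2 * (saddleEvenVariation n t / saddleIntegral n t) := by
        gcongr
        exact le_saddleEvenVariation_div_saddleIntegral ht ht' hn

theorem logDefect_le (ht : 0 < t) (ht' : t ≤ 1 / 70) (hn₀ : n ≠ 0)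
    (hn : logGenCumulant 0 (rexp (-t)) = n) :
    logDefect n ≤ 3 / 2 * (π ^ 2 / 6 / t) - 2.9 := by
  have hhalf : π ^ 2 / 6 / (2 * t) = 1 / 2 * (π ^ 2 / 6 / t) := by field_simp
  linarith [logDefect_le_of_saddleIntegral ht hn₀, logGen_exp_le_sub_log ht,
    two_mul_log_saddleIntegral_le ht ht' n, two_mul_exp_mul_abs_saddleOddVariation_le ht ht' hn,
    le_two_mul_sq_mul_saddleEvenVariation_div ht ht' hn]

theorem three_mul_pi_div_sqrt_mul_sqrt (x : ℝ) :
    3 * π / √24 * √x = 3 / 2 * √(π ^ 2 / 6 * x) := by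
  rw [sqrt_mul (by positivity), show π ^ 2 / 6 = (2 * π) ^ 2 / 24 by ring,
    sqrt_div (by positivity), sqrt_sq (by positivity)]
  ring

theorem pi_sq_div_six_div_sub_le_sqrt (ht : 0 < t) (ht' : t ≤ 1 / 70) :
    π ^ 2 / 6 / t - 0.7 ≤ √(π ^ 2 / 6 * logGenCumulant 0 (rexp (-t))) := by
  have hlarge : 100 ≤ π ^ 2 / 6 / t := by
    rw [le_div_iff₀ ht]
    linarith [three_halves_lt_pi_sq_div_six]
  refine le_sqrt_of_sq_le ?_
  calc
    (π ^ 2 / 6 / t - 0.7) ^ 2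
    _ ≤ (π ^ 2 / 6 / t) ^ 2 - 1.35 * (π ^ 2 / 6 / t) := by linarith
    _ = π ^ 2 / 6 * (π ^ 2 / 6 / t ^ 2 - 1.35 / t) := by ring
    _ ≤ π ^ 2 / 6 * logGenCumulant 0 (rexp (-t)) := by
        gcongr
        exact le_logGenCumulant_zero_exp ht ht'

theorem sqrt_pi_sq_div_six_mul_mul_div_sq_le {x : ℝ} (hx : 100 ≤ x) :
    √(π ^ 2 / 6 * x) * (1.75 / x ^ 2) ≤ 0.1 := by
  have hx₀ : 0 < x := by linarith
  have hsqrt : √(π ^ 2 / 6 * x) ≤ x := by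
    rw [sqrt_le_left hx₀.le, pow_two x]
    gcongr
    linarith [pi_sq_div_six_lt]
  calc
    √(π ^ 2 / 6 * x) * (1.75 / x ^ 2)
    _ ≤ x * (1.75 / x ^ 2) := by gcongr
    _ = 1.75 / x := by field_simp
    _ ≤ 0.1 := by
        rw [div_le_iff₀ hx₀]
        linarith

theorem logDefect_lt_of_large (hn : 8194 ≤ n) :
    logDefect n < 3 * π / √24 * √n * (1 - 1.75 / (n : ℝ) ^ 2) := by
  have hn' : (8194 : ℝ) ≤ n := by exact_mod_cast hn
  obtain ⟨t, ht, ht', htn⟩ := exists_logGenCumulant_zero_eq hn'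
  have hsqrt := pi_sq_div_six_div_sub_le_sqrt ht ht'
  rw [htn] at hsqrt
  rw [three_mul_pi_div_sqrt_mul_sqrt]
  linarith [logDefect_le ht ht' (by lia) htn,
    sqrt_pi_sq_div_six_mul_mul_div_sq_le (x := n) (by linarith)]

end LogDefect

theorem logDefect_lt_of_lt {n : ℕ} (hn : 2 ≤ n) (hn' : n < 8194) :
    logDefect n < 3 * π / √24 * √n * (1 - 1.75 / (n : ℝ) ^ 2) := by
  obtain ⟨i, rfl⟩ := Nat.exists_eq_add_of_le' hn
  have htest : partitionTest ratioTest 13 340 75 = true := by decide +kernel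
  exact logDefect_lt_of_ratioTest hn <| partitionTest_sound htest (by norm_num) (by decide)
    (fun _ hm ↦ card_partition_lt_two_pow hm) (by lia)

theorem nth_root_p_ratio_ineq (n : ℕ) (hn : 2 ≤ n) :
    p n ^ ((1 : ℝ) / (n : ℝ)) / p (n + 1) ^ ((1 : ℝ) / ((n : ℝ) + 1)) *
        (1 + 3 * π / (Real.sqrt 24 * (n : ℝ) ^ ((5 : ℝ) / 2))) >
      p (n - 1) ^ ((1 : ℝ) / ((n : ℝ) - 1)) / p n ^ ((1 : ℝ) / (n : ℝ)) := by
  have hdefect : logDefect n < 3 * π / √24 * √n * (1 - 1.75 / (n : ℝ) ^ 2) := by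
    rcases lt_or_ge n 8194 with h | h
    · exact logDefect_lt_of_lt hn h
    · exact logDefect_lt_of_large h
  exact mul_nth_root_ratio_gt_of_logDefect_lt hn (by positivity)
    (hdefect.trans_le (mul_sqrt_le_mul_log (by exact_mod_cast hn)))
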